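/- arXiv:2112.05055 — 2 statements merged into one kernel-verified Lean document; each statement's English description precedes it below -/
import Mathlib

section
/- Let 𝒯 be an admissible T-mesh, let i ∈ {1,…,d} and n ∈ {0,…,N_i} with ATJ_i(n) nonempty, and let x ∈ ATJ_i(n). Then there exist an anchor A ∈ A_p with x ∈ supp(A) and an i-orthogonal T-junction T ∈ 𝕋_i with associated cell Q = ascell(T) and k = pdir(T) such that: (1) cl(T) ∩ conv(P_{i,n}(A) ∪ {x}) ≠ ∅; (2) Q_k ∩ conv(A_k ∪ {x_k}) ≠ ∅; (3) there exists y ∈ A_k with y ≠ x_k. -/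
open Set

namespace TSpline

/-- A box in `ℝ^d`, given componentwise. -/
abbrev Box (d : ℕ) := Fin d → Set ℝ

/-- The subset of `ℝ^d` determined by a box. -/
def toSet {d : ℕ} (E : Box d) : Set (Fin d → ℝ) := Set.pi Set.univ E

/-- The closed index domain `cl Ω = ∏ₖ [0, Nₖ]`. -/
def domain {d : ℕ} (N : Fin d → ℕ) : Set (Fin d → ℝ) :=
  Set.pi Set.univ (fun k => Set.Icc (0 : ℝ) (N k))

/-- The boundary `∂Ω` of the index domain. -/
def bdryDomain {d : ℕ} (N : Fin d → ℕ) : Set (Fin d → ℝ) := frontier (domain N)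

/-- A component which is an integer singleton `{n}`, `0 ≤ n ≤ Nₖ`. -/
def IsSingletonComp (Nk : ℕ) (S : Set ℝ) : Prop :=
  ∃ n : ℕ, n ≤ Nk ∧ S = {(n : ℝ)}

/-- A component which is an open interval with integer endpoints in `[0, Nₖ]`. -/
def IsIntervalComp (Nk : ℕ) (S : Set ℝ) : Prop :=
  ∃ a b : ℕ, a < b ∧ b ≤ Nk ∧ S = Set.Ioo (a : ℝ) (b : ℝ)

/-- A mesh entity: every component is an integer singleton or an open integer interval. -/
def IsMeshEntity {d : ℕ} (N : Fin d → ℕ) (E : Box d) : Prop :=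
  ∀ k, IsSingletonComp (N k) (E k) ∨ IsIntervalComp (N k) (E k)

/-- The directions in which an entity has a singleton component. -/
def singDirs {d : ℕ} (E : Box d) : Set (Fin d) := {i | ∃ r : ℝ, E i = {r}}

/-- Split all entities of `M` contained in the region `D` whose `j`-th component is `Q j`
into the three children obtained by bisecting the `j`-th component at `m`. -/
def midSplit {d : ℕ} (M : Set (Box d)) (Q : Box d) (j : Fin d) (m : ℝ) (D : Box d) :
    Set (Box d) :=
  (M \ {E | E ∈ M ∧ (∀ k, E k ⊆ D k) ∧ E j = Q j}) ∪
  ⋃ E ∈ {E | E ∈ M ∧ (∀ k, E k ⊆ D k) ∧ E j = Q j},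
    ({Function.update E j (Set.Ioo (sInf (Q j)) m),
      Function.update E j {m},
      Function.update E j (Set.Ioo m (sSup (Q j)))} : Set (Box d))

/-- One symmetric bisection of a `d`-dimensional cell with integer midpoint. -/
def BisectStep {d : ℕ} (N : Fin d → ℕ) (M M' : Set (Box d)) : Prop :=
  ∃ Q ∈ M, ∃ j : Fin d, ∃ a b mid : ℕ,
    (∀ k, IsIntervalComp (N k) (Q k)) ∧
    Q j = Set.Ioo (a : ℝ) (b : ℝ) ∧ a + b = 2 * mid ∧
    M' = midSplit M Q j (mid : ℝ) (fun k => closure (Q k))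

/-- A tensor-product mesh with integer breakpoints. -/
def IsTensorMesh {d : ℕ} (N : Fin d → ℕ) (M : Set (Box d)) : Prop :=
  ∃ G : Fin d → Finset ℕ,
    (∀ k, 0 ∈ G k ∧ N k ∈ G k ∧ ∀ n ∈ G k, n ≤ N k) ∧
    M = {E | ∀ k, (∃ n ∈ G k, E k = {(n : ℝ)}) ∨
          (∃ a ∈ G k, ∃ b ∈ G k, a < b ∧ (∀ c ∈ G k, c ≤ a ∨ b ≤ c) ∧
            E k = Set.Ioo (a : ℝ) (b : ℝ))}

/-- A T-mesh of the index domain: a finite disjoint partition of `cl Ω` into mesh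
entities, obtained from a tensor-product mesh by repeated symmetric bisections. -/
structure TMesh (d : ℕ) (N : Fin d → ℕ) where
  entities : Set (Box d)
  finite : entities.Finite
  mem_entity : ∀ E ∈ entities, IsMeshEntity N E
  union_eq : (⋃ E ∈ entities, toSet E) = domain N
  pairwise_disjoint : ∀ E ∈ entities, ∀ F ∈ entities, E ≠ F → toSet E ∩ toSet F = ∅
  constructed : ∃ M₀ : Set (Box d), IsTensorMesh N M₀ ∧
    Relation.ReflTransGen (BisectStep N) M₀ entities

variable {d : ℕ} {N : Fin d → ℕ}

/-- `H^k`: the entities with exactly `d - k` singleton components. -/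
def Hdim (T : TMesh d N) (k : ℕ) : Set (Box d) :=
  {E ∈ T.entities | (singDirs E).ncard = d - k}

/-- The `j`-orthogonal skeleton `Sk_j`. -/
def skel (T : TMesh d N) (j : Fin d) : Set (Fin d → ℝ) :=
  ⋃ F ∈ {F ∈ Hdim T (d - 1) | ∃ r : ℝ, F j = {r}}, closure (toSet F)

/-- The valence of a `(d-2)`-dimensional entity: the number of hyperfaces in whose
boundary it lies. -/
noncomputable def valence (T : TMesh d N) (J : Box d) : ℕ :=
  {F ∈ Hdim T (d - 1) | toSet J ⊆ frontier (toSet F)}.ncard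

/-- A T-junction (hanging interface). -/
def IsTJunction (T : TMesh d N) (J : Box d) : Prop :=
  J ∈ Hdim T (d - 2) ∧ ¬ toSet J ⊆ bdryDomain N ∧ valence T J < 4

/-- `TJData T J Q i j`: `Q` is an associated cell of the T-junction `J`, with orthogonal
direction `i` and pointing direction `j`. -/
def TJData (T : TMesh d N) (J Q : Box d) (i j : Fin d) : Prop :=
  Q ∈ Hdim T d ∧ toSet J ⊆ frontier (toSet Q) ∧
  closure (toSet J) ∩ Set.pi Set.univ (fun k => frontier (Q k)) = ∅ ∧
  i ≠ j ∧ (∃ r : ℝ, J i = {r}) ∧ (∃ r : ℝ, J j = {r}) ∧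
  J i ⊆ Q i ∧ J i ≠ Q i ∧ J j ⊆ frontier (Q j)

/-- `⌊(p_k + 1)/2⌋`. -/
def halfdeg (p : Fin d → ℕ) (k : Fin d) : ℕ := (p k + 1) / 2

/-- The active region `AR_p`. -/
def activeRegion (N p : Fin d → ℕ) : Set (Fin d → ℝ) :=
  Set.pi Set.univ (fun k => Set.Icc (halfdeg p k : ℝ) ((N k : ℝ) - (halfdeg p k : ℝ)))

/-- The slice `S_k(n)`. -/
def slice (N : Fin d → ℕ) (k : Fin d) (n : ℕ) : Set (Fin d → ℝ) :=
  {x ∈ domain N | x k = (n : ℝ)}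

/-- The `k`-th frame region `FR^(k)`. -/
def frameRegion (N p : Fin d → ℕ) (k : Fin d) : Set (Fin d → ℝ) :=
  {x ∈ domain N | x k ∈ Set.Icc (0 : ℝ) (halfdeg p k : ℝ) ∪
      Set.Icc ((N k : ℝ) - (halfdeg p k : ℝ)) (N k : ℝ)}

/-- Admissibility of a T-mesh. -/
def Admissible (p : Fin d → ℕ) (T : TMesh d N) : Prop :=
  (∀ k : Fin d, ∀ J Q : Box d, ∀ i j : Fin d, IsTJunction T J → TJData T J Q i j →
      (i = k ∨ j = k) → ¬ toSet J ⊆ frameRegion N p k) ∧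
  (∀ k : Fin d, ∀ n : ℕ, (n ≤ halfdeg p k ∨ (N k - halfdeg p k ≤ n ∧ n ≤ N k)) →
      slice N k n ⊆ skel T k)

/-- Anchors of degree `p`. -/
def IsAnchor (p : Fin d → ℕ) (T : TMesh d N) (A : Box d) : Prop :=
  A ∈ T.entities ∧ toSet A ⊆ activeRegion N p ∧
  ∀ j : Fin d, (∃ r : ℝ, A j = {r}) ↔ Odd (p j)

/-- `P_{j,n}(E)`: replace the `j`-th component of `E` by `{n}`. -/
def proj {d : ℕ} (E : Box d) (j : Fin d) (n : ℕ) : Box d :=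
  Function.update E j {(n : ℝ)}

/-- The global knot vector `gv_j(E)` (as a set of integer indices). -/
def gv (T : TMesh d N) (j : Fin d) (E : Box d) : Set ℕ :=
  {n | n ≤ N j ∧ toSet (proj E j n) ⊆ skel T j}

/-- `V` is a block of consecutive entries of `G`. -/
def IsBlockOf (V G : Set ℕ) : Prop :=
  V ⊆ G ∧ V.Finite ∧ ∀ g ∈ G, ∀ a ∈ V, ∀ b ∈ V, a ≤ g → g ≤ b → g ∈ V

/-- Two knot vectors overlap (`⋈`): both occur as blocks of consecutive entries of a
common knot vector. -/
def Overlaps (V₁ V₂ : Set ℕ) : Prop :=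
  ∃ W : Set ℕ, W.Finite ∧ IsBlockOf V₁ W ∧ IsBlockOf V₂ W

/-- The convex hull in `ℝ` of a set of integer indices. -/
def convOf (V : Set ℕ) : Set ℝ := convexHull ℝ ((fun n : ℕ => (n : ℝ)) '' V)

/-- The local knot vector of an anchor `A` in direction `j`: the block of `p_j + 2`
consecutive entries of `gv_j(A)` whose entry of rank `⌊(p_j+1)/2⌋` is `inf A_j`. -/
def IsAnchorKV (T : TMesh d N) (p : Fin d → ℕ) (A : Box d) (j : Fin d) (V : Set ℕ) : Prop :=
  IsBlockOf V (gv T j A) ∧ V.ncard = p j + 2 ∧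
  ∃ a : ℕ, (a : ℝ) = sInf (A j) ∧ a ∈ V ∧ {v ∈ V | v < a}.ncard = halfdeg p j

open Classical in
noncomputable def anchorKV (T : TMesh d N) (p : Fin d → ℕ) (A : Box d) (j : Fin d) :
    Set ℕ :=
  if h : ∃ V, IsAnchorKV T p A j V then h.choose else ∅

/-- The index support of an anchor. -/
noncomputable def suppA (T : TMesh d N) (p : Fin d → ℕ) (A : Box d) : Set (Fin d → ℝ) :=
  Set.pi Set.univ (fun k => convOf (anchorKV T p A k))

/-- The local knot vector of a T-junction `J` (with associated cell `Q`, orthogonal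
direction `i`, pointing direction `j`) in direction `k`. -/
def IsTJKV (T : TMesh d N) (p : Fin d → ℕ) (J Q : Box d) (i j k : Fin d) (V : Set ℕ) :
    Prop :=
  if k = i then ∃ t : ℕ, J i = {(t : ℝ)} ∧ V = {t}
  else if k = j then
    IsBlockOf V (gv T j J) ∧ V.ncard = p j + 1 ∧
    ((Even (p j) ∧ ∃ t : ℕ, J j = {(t : ℝ)} ∧ t ∈ V ∧ {v ∈ V | v < t}.ncard = p j / 2) ∨
     (Odd (p j) ∧ ∃ a b : ℕ, (a : ℝ) = sInf (Q j) ∧ (b : ℝ) = sSup (Q j) ∧ a ∈ V ∧ b ∈ V ∧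
        {v ∈ V | v < a}.ncard = p j / 2 ∧ {v ∈ V | v < b}.ncard = p j / 2 + 1))
  else
    IsBlockOf V (gv T k J) ∧ V.ncard = p k + 2 + p k % 2 ∧
    ∃ a b : ℕ, a ∈ V ∧ b ∈ V ∧ J k = Set.Ioo (a : ℝ) (b : ℝ) ∧
      {v ∈ V | v < a}.ncard = (p k + 1) / 2 ∧ {v ∈ V | v < b}.ncard = (p k + 1) / 2 + 1

/-- Local knot vector of a T-junction, quantifying over the (unique) associated data. -/
def IsTJKVFull (T : TMesh d N) (p : Fin d → ℕ) (J : Box d) (k : Fin d) (V : Set ℕ) :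
    Prop :=
  ∃ Q : Box d, ∃ i j : Fin d, TJData T J Q i j ∧ IsTJKV T p J Q i j k V

open Classical in
noncomputable def tjKV (T : TMesh d N) (p : Fin d → ℕ) (J : Box d) (k : Fin d) : Set ℕ :=
  if h : ∃ V, IsTJKVFull T p J k V then h.choose else ∅

/-- The geometric T-junction extension `GTJ(J)`. -/
noncomputable def GTJ (T : TMesh d N) (p : Fin d → ℕ) (J : Box d) : Set (Fin d → ℝ) :=
  Set.pi Set.univ (fun k => convOf (tjKV T p J k))

/-- `J` is a T-junction with orthogonal direction `i` and pointing direction `j`. -/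
def HasDirs (T : TMesh d N) (J : Box d) (i j : Fin d) : Prop :=
  IsTJunction T J ∧ ∃ Q : Box d, TJData T J Q i j

/-- Strong geometric analysis-suitability. -/
def SGAS (T : TMesh d N) (p : Fin d → ℕ) : Prop :=
  ∀ J₁ J₂ : Box d, ∀ i₁ j₁ i₂ j₂ : Fin d,
    HasDirs T J₁ i₁ j₁ → HasDirs T J₂ i₂ j₂ → i₁ ≠ i₂ →
    GTJ T p J₁ ∩ GTJ T p J₂ = ∅

/-- Weak geometric analysis-suitability. -/
def WGAS (T : TMesh d N) (p : Fin d → ℕ) : Prop :=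
  ∀ J₁ J₂ : Box d, ∀ i₁ j₁ i₂ j₂ : Fin d,
    HasDirs T J₁ i₁ j₁ → HasDirs T J₂ i₂ j₂ → i₁ ≠ i₂ → j₁ ≠ j₂ →
    GTJ T p J₁ ∩ GTJ T p J₂ = ∅

/-- The abstract T-junction extension `ATJ_j(n)`. -/
noncomputable def ATJ (T : TMesh d N) (p : Fin d → ℕ) (j : Fin d) (n : ℕ) :
    Set (Fin d → ℝ) :=
  slice N j n ∩
  (⋃ A ∈ {A : Box d | IsAnchor p T A ∧ n ∈ gv T j A}, suppA T p A) ∩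
  (⋃ A ∈ {A : Box d | IsAnchor p T A ∧ n ∉ gv T j A}, suppA T p A)

/-- `ATJ_j = ⋃ₙ ATJ_j(n)`. -/
noncomputable def ATJfull (T : TMesh d N) (p : Fin d → ℕ) (j : Fin d) :
    Set (Fin d → ℝ) :=
  ⋃ n ∈ Set.Iic (N j), ATJ T p j n

/-- Abstract analysis-suitability. -/
def AAS (T : TMesh d N) (p : Fin d → ℕ) : Prop :=
  ∀ i j : Fin d, i ≠ j → ∀ n m : ℕ, n ≤ N i → m ≤ N j →
    ATJ T p i n ∩ ATJ T p j m = ∅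

/-- Two anchors weakly partially overlap. -/
def WeakPartOverlap (T : TMesh d N) (p : Fin d → ℕ) (A₁ A₂ : Box d) : Prop :=
  ∃ ℓ : Fin d, anchorKV T p A₁ ℓ ≠ anchorKV T p A₂ ℓ ∧
    Overlaps (anchorKV T p A₁ ℓ) (anchorKV T p A₂ ℓ)

/-- Two anchors strongly partially overlap. -/
def StrongPartOverlap (T : TMesh d N) (p : Fin d → ℕ) (A₁ A₂ : Box d) : Prop :=
  suppA T p A₁ ∩ suppA T p A₂ = ∅ ∨
  d - 1 ≤ {k : Fin d | Overlaps (anchorKV T p A₁ k) (anchorKV T p A₂ k)}.ncard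

/-- Weak dual-compatibility. -/
def WDC (T : TMesh d N) (p : Fin d → ℕ) : Prop :=
  ∀ A₁ A₂ : Box d, IsAnchor p T A₁ → IsAnchor p T A₂ → A₁ ≠ A₂ →
    WeakPartOverlap T p A₁ A₂

/-- Strong dual-compatibility. -/
def SDC (T : TMesh d N) (p : Fin d → ℕ) : Prop :=
  ∀ A₁ A₂ : Box d, IsAnchor p T A₁ → IsAnchor p T A₂ → A₁ ≠ A₂ →
    StrongPartOverlap T p A₁ A₂

/-- `Q'` is a neighboring cell of `Q` in direction `ℓ`. -/
def NeighborInDir (T : TMesh d N) (Q Q' : Box d) (ℓ : Fin d) : Prop :=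
  Q' ∈ Hdim T d ∧ Q' ≠ Q ∧
  (sSup (Q ℓ) = sInf (Q' ℓ) ∨ sSup (Q' ℓ) = sInf (Q ℓ)) ∧
  ∀ k : Fin d, k ≠ ℓ → (Q k ∩ Q' k).Nonempty

/-- Assumption A: every cell has neighbor cells in the active region in at least three
pairwise distinct directions. -/
def AssumptionA (T : TMesh d N) (p : Fin d → ℕ) : Prop :=
  ∀ Q ∈ Hdim T d, ∃ l₁ l₂ l₃ : Fin d, l₁ ≠ l₂ ∧ l₁ ≠ l₃ ∧ l₂ ≠ l₃ ∧
    ∀ l ∈ ({l₁, l₂, l₃} : Set (Fin d)),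
      ∃ Q' : Box d, NeighborInDir T Q Q' l ∧ toSet Q' ⊆ activeRegion N p

/-- The extended region `D` of Algorithm `subdiv`. -/
def extendD (N p : Fin d → ℕ) (Q : Box d) (j : Fin d) : Box d := fun ℓ =>
  closure (Q ℓ) ∪
  {x : ℝ | ℓ ≠ j ∧ sInf (Q ℓ) = (halfdeg p ℓ : ℝ) ∧
      x ∈ Set.Icc (0 : ℝ) (halfdeg p ℓ : ℝ)} ∪
  {x : ℝ | ℓ ≠ j ∧ sSup (Q ℓ) = (N ℓ : ℝ) - (halfdeg p ℓ : ℝ) ∧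
      x ∈ Set.Icc ((N ℓ : ℝ) - (halfdeg p ℓ : ℝ)) (N ℓ : ℝ)}

/-- The entity set produced by Algorithm `subdiv(𝒯, Q, j)`. -/
def subdivEntities (N p : Fin d → ℕ) (M : Set (Box d)) (Q : Box d) (j : Fin d) :
    Set (Box d) :=
  midSplit M Q j ((sInf (Q j) + sSup (Q j)) / 2) (extendD N p Q j)

open Classical in
/-- The componentwise minimal bounding box `M(E,F)`. -/
noncomputable def MBox {d : ℕ} (E F : Box d) : Box d := fun ℓ =>
  if (E ℓ ∩ F ℓ).Nonempty then E ℓ ∩ F ℓ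
  else if sSup (E ℓ) ≤ sInf (F ℓ) then Set.Icc (sSup (E ℓ)) (sInf (F ℓ))
  else Set.Icc (sSup (F ℓ)) (sInf (E ℓ))

/-- `V` is the local knot vector of `E` (an anchor or a T-junction) in direction `j`. -/
def IsLocalKVOf (T : TMesh d N) (p : Fin d → ℕ) (E : Box d) (j : Fin d) (V : Set ℕ) :
    Prop :=
  (IsAnchor p T E ∧ IsAnchorKV T p E j V) ∨
  (IsTJunction T E ∧ IsTJKVFull T p E j V)

end TSpline

/-!
Bisections preserve the *frontier condition*: an entity meeting the closure of another one is
contained in it. Indeed, bisections of a tensor-product mesh only produce dyadic subintervals of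
the initial ones, and such an interval, if properly contained in another, does not cross the
midpoint of the latter.

Given `x ∈ ATJ_i(n)`, choose an anchor `A` with `x ∈ supp(A)` and a point `a ∈ P_{i,n}(A)` such that
exactly one of `a` and `x` lies in `Sk_i`. Some point `z ∈ Sk_i` of the segment from `a` to `x` is a
limit of points `v` of the segment outside `Sk_i`. Near `z` the slice is made of unit faces, and one
gets from a face contained in `Sk_i` to one containing `v`, outside `Sk_i`, by changing one
coordinate at a time. The step that leaves `Sk_i`, in direction `k` say, crosses an entity `J`
between an `i`-orthogonal hyperface and a cell `Q`. This cell occupies one of the at most four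
places for hyperfaces around `J`, so `J` is a T-junction, and `v k ∈ Q k`.
-/

namespace TSpline

variable {d : ℕ} {N : Fin d → ℕ}

/-! ### Dyadic intervals -/

/-- The dyadic subintervals of the gaps of `G`: `(a, b)` is one of the `2 ^ s` intervals of equal
integer length `h` into which some interval `(g, g')` between consecutive elements of `G` is
divided. These are the interval components that bisections of a tensor-product mesh with
breakpoints `G` can produce. -/
def IsDyadic (G : Finset ℕ) (a b : ℕ) : Prop :=
  ∃ g ∈ G, ∃ g' ∈ G, (∀ c ∈ G, c ≤ g ∨ g' ≤ c) ∧
    ∃ s q h : ℕ, 0 < h ∧ q < 2 ^ s ∧ g' = g + 2 ^ s * h ∧ a = g + q * h ∧ b = a + h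

namespace IsDyadic

variable {G : Finset ℕ} {a b c e m : ℕ}

lemma of_consecutive (ha : a ∈ G) (hb : b ∈ G) (hab : a < b) (hG : ∀ c ∈ G, c ≤ a ∨ b ≤ c) :
    IsDyadic G a b :=
  ⟨a, ha, b, hb, hG, 0, 0, b - a, by omega, by simp, by omega, by simp, by omega⟩

lemma lt (h : IsDyadic G a b) : a < b := by
  obtain ⟨-, -, -, -, -, -, -, h, hpos, -, -, -, rfl⟩ := h
  omega

lemma bisect (h : IsDyadic G a b) (hm : a + b = 2 * m) : IsDyadic G a m ∧ IsDyadic G m b := by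
  obtain ⟨g, hg, g', hg', hG, s, q, h, hpos, hq, hgg', rfl, rfl⟩ := h
  obtain ⟨h, rfl⟩ : 2 ∣ h := by omega
  obtain rfl : m = g + q * (2 * h) + h := by omega
  refine ⟨⟨g, hg, g', hg', hG, s + 1, 2 * q, h, by omega, ?_, ?_, by ring, rfl⟩,
    ⟨g, hg, g', hg', hG, s + 1, 2 * q + 1, h, by omega, ?_, ?_, by ring, by ring⟩⟩
  · rw [pow_succ]; omega
  · rw [hgg']; ring
  · rw [pow_succ]; omega
  · rw [hgg']; ring

lemma le_mid_or_mid_le (hab : IsDyadic G a b) (hce : IsDyadic G c e) (hac : a ≤ c) (heb : e ≤ b)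
    (hne : ¬ (c = a ∧ e = b)) (hm : a + b = 2 * m) : e ≤ m ∨ m ≤ c := by
  obtain ⟨g, hg, g', hg', hG, s, q, h, hpos, hq, hgg', rfl, rfl⟩ := hab
  obtain ⟨f, hf, f', hf', hG', s', q', h', hpos', hq', hff', rfl, rfl⟩ := hce
  have hqs : q * h + h ≤ 2 ^ s * h := by nlinarith
  have hqs' : q' * h' + h' ≤ 2 ^ s' * h' := by nlinarith
  -- The two gaps overlap, so they coincide.
  obtain rfl : f = g := by
    have := hG f hf; have := hG' g hg; omega
  obtain rfl : f' = g' := by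
    have := hG f' hf'; have := hG' g' hg'; omega
  have hlen : 2 ^ s * h = 2 ^ s' * h' := by omega
  rcases le_or_gt s' s with hs | hs
  · have : 2 ^ s' * h ≤ 2 ^ s' * h' :=
      hlen ▸ Nat.mul_le_mul_right h (Nat.pow_le_pow_right two_pos hs)
    have : h ≤ h' := Nat.le_of_mul_le_mul_left this (by positivity)
    omega
  · -- The midpoint is then a multiple `M * h'` of the shorter length away from `f`.
    obtain ⟨r, rfl⟩ := Nat.exists_eq_add_of_lt hs
    obtain rfl : h = 2 * (2 ^ r * h') := by
      refine Nat.eq_of_mul_eq_mul_left (show 0 < 2 ^ s by positivity) (hlen.trans ?_)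
      ring
    obtain ⟨M, hM⟩ : ∃ M, m = f + M * h' := ⟨2 * q * 2 ^ r + 2 ^ r, by linarith⟩
    rcases lt_or_ge q' M with hqM | hqM
    · left; nlinarith
    · right; nlinarith

end IsDyadic

/-! ### The frontier condition -/

lemma Ioo_natCast_inj {a b c e : ℕ} (hab : a < b) (h : Ioo (a : ℝ) b = Ioo (c : ℝ) e) :
    c = a ∧ e = b := by
  have hab' : (a : ℝ) < b := by exact_mod_cast hab
  have hce : (c : ℝ) < e := nonempty_Ioo.1 (h ▸ nonempty_Ioo.2 hab')
  have hinf : (a : ℝ) = c := by rw [← csInf_Ioo hab', h, csInf_Ioo hce]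
  have hsup : (b : ℝ) = e := by rw [← csSup_Ioo hab', h, csSup_Ioo hce]
  exact ⟨by exact_mod_cast hinf.symm, by exact_mod_cast hsup.symm⟩

lemma Ioo_ne_singleton {a b : ℝ} (hab : a < b) (r : ℝ) : Ioo a b ≠ {r} :=
  fun h => Ioo_infinite hab (h ▸ finite_singleton r)

/-- The three pieces into which the interval `(a, b)` is cut at `m`. -/
def bisectPieces (a m b : ℝ) : Set (Set ℝ) := {Ioo a m, {m}, Ioo m b}

lemma subset_Ioo_of_mem_bisectPieces {a m b : ℝ} (ham : a < m) (hmb : m < b) {P : Set ℝ}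
    (hP : P ∈ bisectPieces a m b) : P ⊆ Ioo a b := by
  rcases hP with rfl | rfl | rfl
  · exact Ioo_subset_Ioo_right hmb.le
  · exact singleton_subset_iff.2 ⟨ham, hmb⟩
  · exact Ioo_subset_Ioo_left ham.le

/-- `S` does not cross `m`: it is at most a point, or lies strictly on one side of `m`. -/
def NotCross (m : ℝ) (S : Set ℝ) : Prop := S.Subsingleton ∨ S ⊆ Iio m ∨ S ⊆ Ioi m

lemma notCross_of_mem_bisectPieces {a m b : ℝ} {P : Set ℝ} (hP : P ∈ bisectPieces a m b) :
    NotCross m P := by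
  rcases hP with rfl | rfl | rfl
  · exact .inr (.inl fun _ h => h.2)
  · exact .inl subsingleton_singleton
  · exact .inr (.inr fun _ h => h.1)

lemma NotCross.subset_closure_piece {a m b : ℝ} {S P : Set ℝ} (hS : NotCross m S)
    (ham : a < m) (hmb : m < b) (hSab : S ⊆ Icc a b) (hP : P ∈ bisectPieces a m b)
    (hSP : (S ∩ closure P).Nonempty) : S ⊆ closure P := by
  obtain ⟨y, hyS, hyP⟩ := hSP
  rcases hS with hS | hS | hS
  · exact fun t ht => hS hyS ht ▸ hyP
  · have hym : y < m := hS hyS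
    rcases hP with rfl | rfl | rfl
    · rw [closure_Ioo ham.ne]
      exact fun t ht => ⟨(hSab ht).1, (hS ht).le⟩
    · exact absurd (by simpa using hyP) hym.ne
    · rw [closure_Ioo hmb.ne] at hyP
      exact absurd hyP.1 hym.not_ge
  · have hym : m < y := hS hyS
    rcases hP with rfl | rfl | rfl
    · rw [closure_Ioo ham.ne] at hyP
      exact absurd hyP.2 hym.not_ge
    · exact absurd (by simpa using hyP) hym.ne'
    · rw [closure_Ioo hmb.ne]
      exact fun t ht => ⟨(hS ht).le, (hSab ht).2⟩

/-- A mesh with dyadic interval components (relative to the breakpoints `G`) that satisfies the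
frontier condition, componentwise. This is the invariant preserved by bisections. -/
structure IsRegularMesh (G : Fin d → Finset ℕ) (M : Set (Box d)) : Prop where
  component : ∀ E ∈ M, ∀ k, (∃ n : ℕ, E k = {(n : ℝ)}) ∨
    ∃ a b : ℕ, IsDyadic (G k) a b ∧ E k = Ioo (a : ℝ) b
  subset_closure : ∀ E ∈ M, ∀ F ∈ M, (∀ k, (E k ∩ closure (F k)).Nonempty) →
    ∀ k, E k ⊆ closure (F k)

lemma IsTensorMesh.exists_isRegularMesh {M : Set (Box d)} (hM : IsTensorMesh N M) :
    ∃ G, IsRegularMesh G M := by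
  obtain ⟨G, -, rfl⟩ := hM
  refine ⟨G, fun E hE k => ?_, fun E hE F hF hEF k => ?_⟩
  · rcases hE k with ⟨n, -, h⟩ | ⟨a, ha, b, hb, hab, hG, h⟩
    · exact .inl ⟨n, h⟩
    · exact .inr ⟨a, b, .of_consecutive ha hb hab hG, h⟩
  · obtain ⟨y, hyE, hyF⟩ := hEF k
    rcases hE k with ⟨n, -, h⟩ | ⟨a, -, b, -, -, hG, h⟩
    · rw [h, mem_singleton_iff] at hyE
      rwa [h, singleton_subset_iff, ← hyE]
    rw [h] at hyE ⊢
    rcases hF k with ⟨n, hn, h'⟩ | ⟨a', ha', b', hb', hab', -, h'⟩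
    · rw [h', closure_singleton, mem_singleton_iff] at hyF
      subst hyF
      have han : a < n := by exact_mod_cast hyE.1
      have hnb : n < b := by exact_mod_cast hyE.2
      have := hG n hn
      omega
    · rw [h', closure_Ioo (by exact_mod_cast hab'.ne)] at hyF ⊢
      have hab'' : a < b' := by exact_mod_cast hyE.1.trans_le hyF.2
      have ha'b : a' < b := by exact_mod_cast hyF.1.trans_lt hyE.2
      have ha'a : a' ≤ a := (hG a' ha').resolve_right ha'b.not_ge
      have hbb' : b ≤ b' := (hG b' hb').resolve_left hab''.not_ge
      exact Ioo_subset_Icc_self.trans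
        (Icc_subset_Icc (by exact_mod_cast ha'a) (by exact_mod_cast hbb'))

namespace IsRegularMesh

variable {G : Fin d → Finset ℕ} {M : Set (Box d)} {Q E : Box d} {j : Fin d} {a b m : ℕ}

lemma isDyadic (hM : IsRegularMesh G M) (hE : E ∈ M) (hab : a < b)
    (hEj : E j = Ioo (a : ℝ) b) : IsDyadic (G j) a b := by
  rcases hM.component E hE j with ⟨n, h⟩ | ⟨c, e, hce, h⟩
  · exact absurd (hEj.symm.trans h) (Ioo_ne_singleton (by exact_mod_cast hab) _)
  · obtain ⟨rfl, rfl⟩ := Ioo_natCast_inj hab (hEj.symm.trans h)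
    exact hce

lemma notCross (hM : IsRegularMesh G M) (hE : E ∈ M) (hab : IsDyadic (G j) a b)
    (hm : a + b = 2 * m) (hEab : E j ⊆ Icc (a : ℝ) b) (hne : E j ≠ Ioo (a : ℝ) b) :
    NotCross m (E j) := by
  rcases hM.component E hE j with ⟨n, h⟩ | ⟨c, e, hce, h⟩
  · exact .inl (h ▸ subsingleton_singleton)
  rw [h] at hEab hne ⊢
  have hceR : (c : ℝ) < e := by exact_mod_cast hce.lt
  have hIcc := closure_minimal hEab isClosed_Icc
  rw [closure_Ioo hceR.ne, Icc_subset_Icc_iff hceR.le] at hIcc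
  have hne' : ¬ (c = a ∧ e = b) := by
    rintro ⟨rfl, rfl⟩
    exact hne rfl
  rcases hab.le_mid_or_mid_le hce (by exact_mod_cast hIcc.1) (by exact_mod_cast hIcc.2) hne' hm
    with hem | hmc
  · exact .inr (.inl fun t ht => ht.2.trans_le (by exact_mod_cast hem))
  · exact .inr (.inr fun t ht => lt_of_le_of_lt (by exact_mod_cast hmc) ht.1)

lemma exists_parent (hQj : Q j = Ioo (a : ℝ) b) (hab : a < b) (hm : a + b = 2 * m)
    (hE : E ∈ midSplit M Q j m (fun k => closure (Q k))) :
    ∃ E' ∈ M, (∀ k ≠ j, E k = E' k) ∧ (∀ k, E k ⊆ E' k) ∧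
      (E j = E' j ∧ ((∀ k, E' k ⊆ closure (Q k)) → E j ≠ Ioo (a : ℝ) b) ∨
        (∀ k, E' k ⊆ closure (Q k)) ∧ E' j = Ioo (a : ℝ) b ∧ E j ∈ bisectPieces a m b) := by
  have habR : (a : ℝ) < b := by exact_mod_cast hab
  simp only [midSplit, mem_union, mem_sdiff, mem_ofPred_eq, mem_iUnion, exists_prop, hQj,
    csInf_Ioo habR, csSup_Ioo habR] at hE
  rcases hE with ⟨hEM, hE⟩ | ⟨E', ⟨hE'M, hE'D, hE'j⟩, hE⟩
  · exact ⟨E, hEM, fun _ _ => rfl, fun _ => subset_rfl,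
      .inl ⟨rfl, fun hED hEj => hE ⟨hEM, hED, hEj⟩⟩⟩
  · obtain ⟨P, hP, rfl⟩ : ∃ P ∈ bisectPieces (a : ℝ) m b, E = Function.update E' j P := by
      simpa [bisectPieces] using hE
    have hPab : P ⊆ E' j := hE'j ▸ subset_Ioo_of_mem_bisectPieces
      (by exact_mod_cast (by omega : a < m)) (by exact_mod_cast (by omega : m < b)) hP
    exact ⟨E', hE'M, fun k hk => Function.update_of_ne hk _ _,
      update_le_iff.2 ⟨hPab, fun _ _ => le_rfl⟩,
      .inr ⟨hE'D, hE'j, by rwa [Function.update_self]⟩⟩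

lemma component_bisection (hM : IsRegularMesh G M) (hQj : Q j = Ioo (a : ℝ) b) (hab : a < b)
    (hm : a + b = 2 * m) (hE : E ∈ midSplit M Q j m (fun k => closure (Q k))) (k : Fin d) :
    (∃ n : ℕ, E k = {(n : ℝ)}) ∨ ∃ c e : ℕ, IsDyadic (G k) c e ∧ E k = Ioo (c : ℝ) e := by
  obtain ⟨E', hE', hne, -, hj⟩ := exists_parent hQj hab hm hE
  rcases ne_or_eq k j with hk | rfl
  · rw [hne k hk]
    exact hM.component E' hE' k
  rcases hj with ⟨hEE', -⟩ | ⟨-, hE'k, hP⟩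
  · rw [hEE']
    exact hM.component E' hE' k
  obtain ⟨ham, hmb⟩ := (hM.isDyadic hE' hab hE'k).bisect hm
  rcases hP with h | h | h
  · exact .inr ⟨a, m, ham, h⟩
  · exact .inl ⟨m, h⟩
  · exact .inr ⟨m, b, hmb, h⟩

lemma subset_closure_bisection {F : Box d} (hM : IsRegularMesh G M)
    (hQj : Q j = Ioo (a : ℝ) b) (hab : a < b) (hm : a + b = 2 * m)
    (hE : E ∈ midSplit M Q j m (fun k => closure (Q k)))
    (hF : F ∈ midSplit M Q j m (fun k => closure (Q k)))
    (hEF : ∀ k, (E k ∩ closure (F k)).Nonempty) (k : Fin d) : E k ⊆ closure (F k) := by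
  have ham : (a : ℝ) < m := by exact_mod_cast (by omega : a < m)
  have hmb : (m : ℝ) < b := by exact_mod_cast (by omega : m < b)
  obtain ⟨E', hE', hEne, hEE', hEj⟩ := exists_parent hQj hab hm hE
  obtain ⟨F', hF', hFne, hFF', hFj⟩ := exists_parent hQj hab hm hF
  have hE'F' := hM.subset_closure E' hE' F' hF' fun k =>
    (hEF k).mono (inter_subset_inter (hEE' k) (closure_mono (hFF' k)))
  rcases ne_or_eq k j with hk | rfl
  · rw [hEne k hk, hFne k hk]
    exact hE'F' k
  rcases hFj with ⟨hFj, -⟩ | ⟨hF'Q, hF'j, hFP⟩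
  · rw [hFj]
    exact (hEE' k).trans (hE'F' k)
  have hEab : E k ⊆ Icc (a : ℝ) b := by
    rw [← closure_Ioo (ham.trans hmb).ne, ← hF'j]
    exact (hEE' k).trans (hE'F' k)
  -- Since `E'` lies in the closure of the bisected cell, `E k` cannot be an uncut copy of `(a, b)`.
  have hEm : NotCross m (E k) := by
    rcases hEj with ⟨hEj, hEne⟩ | ⟨-, -, hP⟩
    · have hE'Q : ∀ l, E' l ⊆ closure (Q l) := fun l =>
        (hE'F' l).trans (closure_minimal (hF'Q l) isClosed_closure)
      rw [hEj] at hEab hEne ⊢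
      exact hM.notCross hE' (hM.isDyadic hF' hab hF'j) hm hEab (hEne hE'Q)
    · exact notCross_of_mem_bisectPieces hP
  exact hEm.subset_closure_piece ham hmb hEab hFP (hEF k)

lemma bisectStep {M' : Set (Box d)} (hM : IsRegularMesh G M) (hMM' : BisectStep N M M') :
    IsRegularMesh G M' := by
  obtain ⟨Q, -, j, a, b, m, hQ, hQj, hm, rfl⟩ := hMM'
  have hab : a < b := by
    rcases hQ j with ⟨c, e, hce, -, h⟩
    obtain ⟨rfl, rfl⟩ := Ioo_natCast_inj hce (h.symm.trans hQj)
    exact hce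
  exact ⟨fun E hE => hM.component_bisection hQj hab hm hE,
    fun E hE F hF hEF => hM.subset_closure_bisection hQj hab hm hE hF hEF⟩

lemma of_reflTransGen {M' : Set (Box d)} (hM : IsRegularMesh G M)
    (hMM' : Relation.ReflTransGen (BisectStep N) M M') : IsRegularMesh G M' := by
  induction hMM' with
  | refl => exact hM
  | tail _ hstep hM => exact hM.bisectStep hstep

end IsRegularMesh

lemma mem_toSet {E : Box d} {y : Fin d → ℝ} : y ∈ toSet E ↔ ∀ k, y k ∈ E k :=
  mem_univ_pi

lemma mem_closure_toSet {E : Box d} {y : Fin d → ℝ} :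
    y ∈ closure (toSet E) ↔ ∀ k, y k ∈ closure (E k) := by
  rw [toSet, closure_pi_set, mem_univ_pi]

lemma TMesh.frontier_condition (T : TMesh d N) {E F : Box d} (hE : E ∈ T.entities)
    (hF : F ∈ T.entities) {y : Fin d → ℝ} (hyE : y ∈ toSet E) (hyF : y ∈ closure (toSet F))
    (k : Fin d) : E k ⊆ closure (F k) := by
  obtain ⟨M₀, hM₀, hsteps⟩ := T.constructed
  obtain ⟨G, hG⟩ := hM₀.exists_isRegularMesh
  exact (hG.of_reflTransGen hsteps).subset_closure E hE F hF
    (fun l => ⟨y l, mem_toSet.1 hyE l, mem_closure_toSet.1 hyF l⟩) k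

/-! ### Components and unit intervals -/

/-- An integer singleton or an open interval with integer endpoints. -/
def IsComponent (S : Set ℝ) : Prop :=
  (∃ n : ℤ, S = {(n : ℝ)}) ∨ ∃ a b : ℤ, a < b ∧ S = Ioo (a : ℝ) b

namespace IsComponent

variable {S : Set ℝ} {m q : ℤ} {y σ : ℝ}

lemma nonempty (hS : IsComponent S) : S.Nonempty := by
  rcases hS with ⟨n, rfl⟩ | ⟨a, b, hab, rfl⟩
  · exact singleton_nonempty _
  · exact nonempty_Ioo.2 (by exact_mod_cast hab)

lemma exists_eq_Ioo (hS : IsComponent S) (h : ¬ ∃ r, S = {r}) :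
    ∃ a b : ℤ, a < b ∧ S = Ioo (a : ℝ) b :=
  hS.resolve_left fun ⟨n, hn⟩ => h ⟨n, hn⟩

lemma isOpen (hS : IsComponent S) (h : ¬ ∃ r, S = {r}) : IsOpen S := by
  obtain ⟨a, b, -, rfl⟩ := hS.exists_eq_Ioo h
  exact isOpen_Ioo

lemma interior_closure (hS : IsComponent S) (h : ¬ ∃ r, S = {r}) : interior (closure S) = S := by
  obtain ⟨a, b, hab, rfl⟩ := hS.exists_eq_Ioo h
  rw [closure_Ioo (by exact_mod_cast hab.ne), interior_Icc]

lemma Ioo_subset (hS : IsComponent S) (hyS : y ∈ S) (hy : y ∈ Ioo (q : ℝ) (q + 1)) :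
    Ioo (q : ℝ) (q + 1) ⊆ S := by
  rcases hS with ⟨n, rfl⟩ | ⟨a, b, -, rfl⟩
  · obtain rfl : y = n := hyS
    have : q < n := by exact_mod_cast hy.1
    have : n < q + 1 := by exact_mod_cast hy.2
    omega
  · have haq : a < q + 1 := by exact_mod_cast hyS.1.trans hy.2
    have hqb : q < b := by exact_mod_cast hy.1.trans hyS.2
    exact Ioo_subset_Ioo (by exact_mod_cast (by omega : a ≤ q))
      (by exact_mod_cast (by omega : q + 1 ≤ b))

lemma Icc_subset_closure (hS : IsComponent S) (hyS : y ∈ S) (hy : y ∈ Ioo (q : ℝ) (q + 1)) :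
    Icc (q : ℝ) (q + 1) ⊆ closure S := by
  rw [← closure_Ioo (lt_add_one (q : ℝ)).ne]
  exact closure_mono (hS.Ioo_subset hyS hy)

lemma ne_singleton (hS : IsComponent S) (hyS : y ∈ S) (hy : y ∈ Ioo (q : ℝ) (q + 1)) :
    ¬ ∃ r, S = {r} := by
  rintro ⟨r, rfl⟩
  exact Ioo_infinite (lt_add_one (q : ℝ)) ((finite_singleton r).subset (hS.Ioo_subset hyS hy))

lemma mem_of_mem_closure (hS : IsComponent S) (hyS : y ∈ closure S)
    (hy : y ∈ Ioo (q : ℝ) (q + 1)) : y ∈ S := by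
  rcases hS with ⟨n, rfl⟩ | ⟨a, b, hab, rfl⟩
  · simpa using hyS
  · rw [closure_Ioo (by exact_mod_cast hab.ne)] at hyS
    have haq : a < q + 1 := by exact_mod_cast hyS.1.trans_lt hy.2
    have hqb : q < b := by exact_mod_cast hy.1.trans_le hyS.2
    exact ⟨lt_of_le_of_lt (by exact_mod_cast (by omega : a ≤ q)) hy.1,
      hy.2.trans_le (by exact_mod_cast (by omega : q + 1 ≤ b))⟩

lemma sub_mem_of_add_mem (hS : IsComponent S) (hσ : |σ| = 1 / 2) (hm : (m : ℝ) ∈ S)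
    (h : m + σ ∈ S) : m - σ ∈ S := by
  rcases hS with ⟨n, rfl⟩ | ⟨a, b, -, rfl⟩
  · obtain rfl : σ = 0 := by
      rw [mem_singleton_iff] at hm h
      linarith
    norm_num at hσ
  · have ham : (a : ℝ) + 1 ≤ m := by exact_mod_cast hm.1
    have hmb : (m : ℝ) + 1 ≤ b := by exact_mod_cast hm.2
    rcases (abs_eq (by norm_num)).1 hσ with rfl | rfl <;> constructor <;> linarith

lemma add_or_sub_half_mem (hS : IsComponent S) (hne : ¬ ∃ r, S = {r})
    (hm : (m : ℝ) ∈ closure S) (hmS : (m : ℝ) ∉ S) :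
    (m : ℝ) + 1 / 2 ∈ S ∨ (m : ℝ) - 1 / 2 ∈ S := by
  obtain ⟨a, b, hab, rfl⟩ := hS.exists_eq_Ioo hne
  have habR : (a : ℝ) + 1 ≤ b := by exact_mod_cast hab
  rw [closure_Ioo (by linarith)] at hm
  rcases eq_endpoints_or_mem_Ioo_of_mem_Icc hm with hma | hmb | hm
  · exact .inl (hma ▸ ⟨by linarith, by linarith⟩)
  · exact .inr (hmb ▸ ⟨by linarith, by linarith⟩)
  · exact absurd hm hmS

end IsComponent

lemma exists_add_mem_Ioo {σ : ℝ} (hσ : |σ| = 1 / 2) (m : ℤ) :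
    ∃ q : ℤ, (m : ℝ) + σ ∈ Ioo (q : ℝ) (q + 1) ∧ (m : ℝ) ∈ Icc (q : ℝ) (q + 1) := by
  rcases (abs_eq (by norm_num)).1 hσ with rfl | rfl
  · exact ⟨m, by constructor <;> linarith, by constructor <;> linarith⟩
  · exact ⟨m - 1, by push_cast; constructor <;> linarith, by push_cast; constructor <;> linarith⟩

/-! ### Entities of a T-mesh -/

lemma eq_singleton_of_mem_singDirs {E : Box d} {k : Fin d} (hk : k ∈ singDirs E) {y : ℝ}
    (hy : y ∈ E k) : E k = {y} := by
  obtain ⟨r, hr⟩ := hk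
  rw [hr] at hy ⊢
  rw [mem_singleton_iff.1 hy]

namespace TMesh

variable (T : TMesh d N) {E F : Box d} {y : Fin d → ℝ}

lemma eq_of_mem (hE : E ∈ T.entities) (hF : F ∈ T.entities) (hyE : y ∈ toSet E)
    (hyF : y ∈ toSet F) : E = F := by
  by_contra h
  exact (T.pairwise_disjoint E hE F hF h).subset ⟨hyE, hyF⟩

lemma exists_entity (hy : y ∈ domain N) : ∃ E ∈ T.entities, y ∈ toSet E := by
  rw [← T.union_eq] at hy
  simpa only [mem_iUnion, exists_prop] using hy

lemma subset_Icc (hE : E ∈ T.entities) (k : Fin d) : E k ⊆ Icc (0 : ℝ) (N k) := by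
  rcases T.mem_entity E hE k with ⟨n, hn, h⟩ | ⟨a, b, -, hb, h⟩
  · rw [h, singleton_subset_iff]
    exact ⟨Nat.cast_nonneg n, by exact_mod_cast hn⟩
  · exact h ▸ Ioo_subset_Icc_self.trans
      (Icc_subset_Icc (Nat.cast_nonneg a) (by exact_mod_cast hb))

lemma toSet_subset_domain (hE : E ∈ T.entities) : toSet E ⊆ domain N :=
  pi_mono fun k _ => T.subset_Icc hE k

lemma closure_toSet_subset_domain (hE : E ∈ T.entities) : closure (toSet E) ⊆ domain N :=
  closure_minimal (T.toSet_subset_domain hE) (isClosed_set_pi fun _ _ => isClosed_Icc)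

lemma isComponent (hE : E ∈ T.entities) (k : Fin d) : IsComponent (E k) := by
  rcases T.mem_entity E hE k with ⟨n, -, h⟩ | ⟨a, b, hab, -, h⟩
  · exact .inl ⟨n, by exact_mod_cast h⟩
  · exact .inr ⟨a, b, by exact_mod_cast hab, by exact_mod_cast h⟩

lemma mem_Hdim_self_iff : E ∈ Hdim T d ↔ E ∈ T.entities ∧ singDirs E = ∅ := by
  rw [Hdim, mem_ofPred_eq, Nat.sub_self, ncard_eq_zero (toFinite _)]

lemma mem_Hdim_sub_one_iff [NeZero d] :
    E ∈ Hdim T (d - 1) ↔ E ∈ T.entities ∧ ∃ j, singDirs E = {j} := by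
  rw [Hdim, mem_ofPred_eq, Nat.sub_sub_self NeZero.one_le, ncard_eq_one]

lemma mem_Hdim_sub_two {i k : Fin d} (hik : i ≠ k) (hE : E ∈ T.entities)
    (h : singDirs E = {i, k}) : E ∈ Hdim T (d - 2) := by
  have hd : 2 ≤ d := by
    have := i.isLt; have := k.isLt; have := Fin.val_ne_of_ne hik; omega
  exact ⟨hE, by rw [h, ncard_pair hik, Nat.sub_sub_self hd]⟩

lemma subset_Ioo (hE : E ∈ T.entities) {k : Fin d} (hk : k ∉ singDirs E) :
    E k ⊆ Ioo (0 : ℝ) (N k) := by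
  rcases T.mem_entity E hE k with ⟨n, -, h⟩ | ⟨a, b, -, hb, h⟩
  · exact absurd ⟨_, h⟩ hk
  · exact h ▸ Ioo_subset_Ioo (Nat.cast_nonneg a) (by exact_mod_cast hb)

end TMesh

/-! ### T-junctions at hanging points -/

lemma mem_closure_of_update_mem {E : Box d} {h : Fin d → ℝ} {k : Fin d} {m : ℤ} {σ : ℝ}
    (hE : IsComponent (E k)) (hk : h k = m) (hσ : |σ| = 1 / 2)
    (hhE : Function.update h k (m + σ) ∈ toSet E) : h ∈ closure (toSet E) := by
  refine mem_closure_toSet.2 fun l => ?_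
  have hl := mem_toSet.1 hhE l
  rcases eq_or_ne l k with rfl | hlk
  · obtain ⟨q, hq, hm⟩ := exists_add_mem_Ioo hσ m
    rw [Function.update_self] at hl
    exact hk ▸ hE.Icc_subset_closure hl hq hm
  · rw [Function.update_of_ne hlk] at hl
    exact subset_closure hl

/-- The local picture that produces a T-junction: in direction `k`, the point `h` of the entity `J`
separates the `i`-orthogonal entity `F`, on the side of `-σ`, from the entity `Q`, on the side of
`σ`, which is not `i`-orthogonal. In the directions other than `i` and `k`, the point `h` is in
generic position. -/
structure IsHangingPoint (T : TMesh d N) (h : Fin d → ℝ) (i k : Fin d) (m : ℤ) (σ : ℝ)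
    (J F Q : Box d) : Prop where
  ne : i ≠ k
  abs_eq_half : |σ| = 1 / 2
  apply_eq : h k = m
  exists_mem_Ioo : ∀ l, l ≠ i → l ≠ k → ∃ q : ℤ, h l ∈ Ioo (q : ℝ) (q + 1)
  left_mem : F ∈ T.entities
  right_mem : Q ∈ T.entities
  mid_mem : J ∈ T.entities
  mem_left : Function.update h k (m - σ) ∈ toSet F
  mem_right : Function.update h k (m + σ) ∈ toSet Q
  mem_mid : h ∈ toSet J
  left_singDirs : i ∈ singDirs F
  right_singDirs : i ∉ singDirs Q

/-- The four points at distance `1 / 2` from `h` in the coordinate directions `i` and `k`. -/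
def halfNeighbors (h : Fin d → ℝ) (i k : Fin d) : Set (Fin d → ℝ) :=
  {Function.update h i (h i + 1 / 2), Function.update h i (h i - 1 / 2),
    Function.update h k (h k + 1 / 2), Function.update h k (h k - 1 / 2)}

lemma finite_halfNeighbors (h : Fin d → ℝ) (i k : Fin d) : (halfNeighbors h i k).Finite := by
  simp [halfNeighbors]

lemma ncard_halfNeighbors_le (h : Fin d → ℝ) (i k : Fin d) : (halfNeighbors h i k).ncard ≤ 4 :=
  (ncard_insert_le _ _).trans (Nat.succ_le_succ ((ncard_insert_le _ _).trans
    (Nat.succ_le_succ ((ncard_insert_le _ _).trans (by rw [ncard_singleton])))))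

lemma exists_update_half_mem {G : Box d} {h : Fin d → ℝ} {l : Fin d} {n : ℤ}
    (hG : IsComponent (G l)) (hn : h l = n) (hl : h l ∈ closure (G l)) (hGl : ¬ ∃ r, G l = {r})
    (hother : ∀ l' ≠ l, h l' ∈ G l') (hhG : h ∉ toSet G) :
    Function.update h l (h l + 1 / 2) ∈ toSet G ∨
      Function.update h l (h l - 1 / 2) ∈ toSet G := by
  have hlG : h l ∉ G l := fun hlG => hhG fun l' _ =>
    (eq_or_ne l' l).elim (fun h => h ▸ hlG) (hother l')
  have hupd (y : ℝ) (hy : y ∈ G l) : Function.update h l y ∈ toSet G := mem_toSet.2 fun l' => by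
    rcases eq_or_ne l' l with rfl | hl'
    · rwa [Function.update_self]
    · rw [Function.update_of_ne hl']
      exact hother l' hl'
  rw [hn] at hl hlG ⊢
  exact (hG.add_or_sub_half_mem hGl hl hlG).imp (hupd _) (hupd _)

/-- Choosing a point of `P` in each hyperface at `J` is injective by disjointness of the entities,
and misses the point of `P` in `Q`. -/
lemma valence_lt_ncard (T : TMesh d N) {J Q : Box d} {P : Set (Fin d → ℝ)} (hP : P.Finite)
    (hQ : Q ∈ T.entities) (hQ' : Q ∉ Hdim T (d - 1)) (hQP : (P ∩ toSet Q).Nonempty)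
    (hJ : ∀ G ∈ Hdim T (d - 1), toSet J ⊆ frontier (toSet G) → (P ∩ toSet G).Nonempty) :
    valence T J < P.ncard := by
  obtain ⟨q, hqP, hqQ⟩ := hQP
  choose! f hfP hfG using hJ
  have hmaps : ∀ G ∈ {G ∈ Hdim T (d - 1) | toSet J ⊆ frontier (toSet G)}, f G ∈ P \ {q} := by
    rintro G ⟨hG, hJG⟩
    refine ⟨hfP G hG hJG, fun hGq => hQ' ?_⟩
    rwa [T.eq_of_mem hQ hG.1 hqQ (mem_singleton_iff.1 hGq ▸ hfG G hG hJG)]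
  refine (ncard_le_ncard_of_injOn f hmaps ?_ hP.sdiff).trans_lt
    (ncard_sdiff_singleton_lt_of_mem hqP hP)
  rintro G ⟨hG, hJG⟩ G' ⟨hG', hJG'⟩ hGG'
  exact T.eq_of_mem hG.1 hG'.1 (hfG G hG hJG) (hGG' ▸ hfG G' hG' hJG')

namespace IsHangingPoint

variable {T : TMesh d N} {h : Fin d → ℝ} {i k : Fin d} {m : ℤ} {σ : ℝ} {J F Q : Box d}

lemma apply_mem_right (H : IsHangingPoint T h i k m σ J F Q) {l : Fin d} (hl : l ≠ k) :
    h l ∈ Q l := by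
  simpa [hl] using mem_toSet.1 H.mem_right l

lemma singDirs_right (H : IsHangingPoint T h i k m σ J F Q) : singDirs Q = ∅ := by
  refine eq_empty_of_forall_notMem fun l hl => ?_
  rcases eq_or_ne l i with rfl | hli
  · exact H.right_singDirs hl
  · obtain ⟨q, hqQ, hq⟩ : ∃ q : ℤ, ∃ y ∈ Q l, y ∈ Ioo (q : ℝ) (q + 1) := by
      rcases eq_or_ne l k with rfl | hlk
      · obtain ⟨q, hq, -⟩ := exists_add_mem_Ioo H.abs_eq_half m
        exact ⟨q, _, by simpa using mem_toSet.1 H.mem_right l, hq⟩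
      · obtain ⟨q, hq⟩ := H.exists_mem_Ioo l hli hlk
        exact ⟨q, _, H.apply_mem_right hlk, hq⟩
    exact (T.isComponent H.right_mem l).ne_singleton hq.1 hq.2 hl

lemma mem_closure_right (H : IsHangingPoint T h i k m σ J F Q) : h ∈ closure (toSet Q) :=
  mem_closure_of_update_mem (T.isComponent H.right_mem k) H.apply_eq H.abs_eq_half H.mem_right

lemma mem_closure_left (H : IsHangingPoint T h i k m σ J F Q) : h ∈ closure (toSet F) :=
  mem_closure_of_update_mem (T.isComponent H.left_mem k) H.apply_eq (by rw [abs_neg, H.abs_eq_half])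
    (by simpa only [sub_eq_add_neg] using H.mem_left)

lemma apply_notMem_right (H : IsHangingPoint T h i k m σ J F Q) : h k ∉ Q k := by
  intro hkQ
  have hQF : Q = F := by
    refine T.eq_of_mem H.right_mem H.left_mem (mem_toSet.2 fun l => ?_) H.mem_left
    rcases eq_or_ne l k with rfl | hlk
    · rw [H.apply_eq] at hkQ
      simpa using (T.isComponent H.right_mem l).sub_mem_of_add_mem H.abs_eq_half hkQ
        (by simpa using mem_toSet.1 H.mem_right l)
    · simpa [hlk] using H.apply_mem_right hlk
  exact H.right_singDirs (hQF ▸ H.left_singDirs)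

lemma mid_apply_orthogonal (H : IsHangingPoint T h i k m σ J F Q) : J i = {h i} := by
  have hJF := T.frontier_condition H.mid_mem H.left_mem H.mem_mid H.mem_closure_left i
  have hFi : F i = {h i} := eq_singleton_of_mem_singDirs H.left_singDirs
    (by simpa [H.ne] using mem_toSet.1 H.mem_left i)
  rw [hFi, closure_singleton] at hJF
  exact hJF.antisymm (singleton_subset_iff.2 (mem_toSet.1 H.mem_mid i))

lemma mid_apply_pointing (H : IsHangingPoint T h i k m σ J F Q) : J k = {h k} := by
  refine eq_singleton_of_mem_singDirs ?_ (mem_toSet.1 H.mem_mid k)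
  by_contra hk
  have hJQ := interior_mono (T.frontier_condition H.mid_mem H.right_mem H.mem_mid
    H.mem_closure_right k)
  rw [((T.isComponent H.mid_mem k).isOpen hk).interior_eq, (T.isComponent H.right_mem
    k).interior_closure (H.singDirs_right ▸ notMem_empty k : k ∉ singDirs Q)] at hJQ
  exact H.apply_notMem_right (hJQ (mem_toSet.1 H.mem_mid k))

lemma singDirs_mid (H : IsHangingPoint T h i k m σ J F Q) : singDirs J = {i, k} := by
  ext l
  refine ⟨fun hl => ?_, ?_⟩
  · by_contra hlik
    rw [mem_insert_iff, mem_singleton_iff, not_or] at hlik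
    obtain ⟨q, hq⟩ := H.exists_mem_Ioo l hlik.1 hlik.2
    exact (T.isComponent H.mid_mem l).ne_singleton (mem_toSet.1 H.mem_mid l) hq hl
  · rintro (rfl | rfl)
    · exact ⟨_, H.mid_apply_orthogonal⟩
    · exact ⟨_, H.mid_apply_pointing⟩

lemma tjData (H : IsHangingPoint T h i k m σ J F Q) : TJData T J Q i k := by
  have hQ (l : Fin d) : ¬ ∃ r, Q l = {r} := (H.singDirs_right ▸ notMem_empty l : l ∉ singDirs Q)
  have hJQ (l : Fin d) : J l ⊆ closure (Q l) :=
    T.frontier_condition H.mid_mem H.right_mem H.mem_mid H.mem_closure_right l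
  have hi : h i ∈ Q i := H.apply_mem_right H.ne
  refine ⟨T.mem_Hdim_self_iff.2 ⟨H.right_mem, H.singDirs_right⟩, fun y hy => ⟨?_, ?_⟩, ?_, H.ne,
    ⟨_, H.mid_apply_orthogonal⟩, ⟨_, H.mid_apply_pointing⟩, ?_, fun h => ?_, ?_⟩
  · exact mem_closure_toSet.2 fun l => hJQ l (mem_toSet.1 hy l)
  · intro hyQ
    have hJeq := T.eq_of_mem H.mid_mem H.right_mem hy (interior_subset hyQ)
    exact hQ k ⟨_, hJeq ▸ H.mid_apply_pointing⟩
  · refine eq_empty_of_forall_notMem fun y ⟨hyJ, hyQ⟩ => ?_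
    have hyi := mem_closure_toSet.1 hyJ i
    rw [H.mid_apply_orthogonal, closure_singleton, mem_singleton_iff] at hyi
    have : y i ∈ frontier (Q i) := hyQ i (mem_univ i)
    rw [((T.isComponent H.right_mem i).isOpen (hQ i)).frontier_eq, hyi] at this
    exact this.2 hi
  · exact H.mid_apply_orthogonal ▸ singleton_subset_iff.2 hi
  · exact hQ i ⟨_, h ▸ H.mid_apply_orthogonal⟩
  · rw [H.mid_apply_pointing, singleton_subset_iff]
    exact ⟨mem_closure_toSet.1 H.mem_closure_right k, fun hk =>
      H.apply_notMem_right (interior_subset hk)⟩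

lemma notMem_bdryDomain (H : IsHangingPoint T h i k m σ J F Q) : h ∉ bdryDomain N := by
  refine fun hh => hh.2 ?_
  rw [domain, interior_pi_set finite_univ]
  intro l _
  simp only [interior_Icc]
  rcases eq_or_ne l k with rfl | hlk
  · have hF := T.toSet_subset_domain H.left_mem H.mem_left l (mem_univ l)
    have hQ := T.toSet_subset_domain H.right_mem H.mem_right l (mem_univ l)
    simp only [Function.update_self, mem_Icc] at hF hQ
    rw [H.apply_eq]
    rcases (abs_eq (by norm_num)).1 H.abs_eq_half with rfl | rfl <;> constructor <;> linarith
  · exact T.subset_Ioo H.right_mem (H.singDirs_right ▸ notMem_empty l) (H.apply_mem_right hlk)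

lemma exists_integer (H : IsHangingPoint T h i k m σ J F Q) : ∃ n : ℤ, h i = n := by
  rcases T.isComponent H.mid_mem i with ⟨n, hn⟩ | ⟨a, b, hab, hJ⟩
  · exact ⟨n, singleton_injective (H.mid_apply_orthogonal.symm.trans hn)⟩
  · exact absurd (hJ.symm.trans H.mid_apply_orthogonal) (Ioo_ne_singleton (by exact_mod_cast hab) _)

/-- If `G` is `i`- or `k`-orthogonal, then the other one of its components in the directions `i` and
`k` is an interval with `h` at an endpoint, hence reaches one of the four half-unit neighbors. -/
lemma halfNeighbors_inter_nonempty (H : IsHangingPoint T h i k m σ J F Q) [NeZero d] {G : Box d}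
    (hG : G ∈ Hdim T (d - 1)) (hJG : toSet J ⊆ frontier (toSet G)) :
    (halfNeighbors h i k ∩ toSet G).Nonempty := by
  obtain ⟨hGT, j, hj⟩ := T.mem_Hdim_sub_one_iff.1 hG
  have hhG (l : Fin d) : h l ∈ closure (G l) := mem_closure_toSet.1 (hJG H.mem_mid).1 l
  have hhG' : h ∉ toSet G := fun hh => by
    have hij : ({i, k} : Set (Fin d)) = {j} := by
      rw [← H.singDirs_mid, T.eq_of_mem H.mid_mem hGT H.mem_mid hh, hj]
    exact (nontrivial_pair H.ne).ne_singleton hij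
  have hother (l : Fin d) (hli : l ≠ i) (hlk : l ≠ k) : h l ∈ G l := by
    obtain ⟨q, hq⟩ := H.exists_mem_Ioo l hli hlk
    exact (T.isComponent hGT l).mem_of_mem_closure (hhG l) hq
  have hsing : h j ∈ G j := by
    obtain ⟨r, hr⟩ : j ∈ singDirs G := hj ▸ rfl
    simpa [hr] using hhG j
  have hnot {l : Fin d} (hl : l ≠ j) : ¬ ∃ r, G l = {r} := fun h => hl (hj.subset h)
  obtain rfl | rfl : j = i ∨ j = k := by
    by_contra! hjik
    obtain ⟨q, hq⟩ := H.exists_mem_Ioo j hjik.1 hjik.2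
    exact (T.isComponent hGT j).ne_singleton hsing hq (hj ▸ rfl : j ∈ singDirs G)
  · obtain hk | hk := exists_update_half_mem (T.isComponent hGT k) H.apply_eq (hhG k)
      (hnot H.ne.symm)
      (fun l hl => (eq_or_ne l j).elim (fun h => h ▸ hsing) fun h => hother l h hl) hhG'
    · exact ⟨_, by simp [halfNeighbors], hk⟩
    · exact ⟨_, by simp [halfNeighbors], hk⟩
  · obtain ⟨n, hn⟩ := H.exists_integer
    obtain hi | hi := exists_update_half_mem (T.isComponent hGT i) hn (hhG i) (hnot H.ne)
      (fun l hl => (eq_or_ne l j).elim (fun h => h ▸ hsing) fun h => hother l hl h) hhG'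
    · exact ⟨_, by simp [halfNeighbors], hi⟩
    · exact ⟨_, by simp [halfNeighbors], hi⟩

lemma isTJunction (H : IsHangingPoint T h i k m σ J F Q) : IsTJunction T J := by
  have : NeZero d := ⟨i.pos.ne'⟩
  refine ⟨T.mem_Hdim_sub_two H.ne H.mid_mem H.singDirs_mid,
    fun hJ => H.notMem_bdryDomain (hJ H.mem_mid), ?_⟩
  refine (valence_lt_ncard T (finite_halfNeighbors h i k) H.right_mem ?_ ?_
    fun G => H.halfNeighbors_inter_nonempty).trans_le (ncard_halfNeighbors_le h i k)
  · intro hQ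
    obtain ⟨-, j, hj⟩ := T.mem_Hdim_sub_one_iff.1 hQ
    exact (singleton_ne_empty j) (hj.symm.trans H.singDirs_right)
  · refine ⟨_, ?_, H.mem_right⟩
    rw [← H.apply_eq]
    rcases (abs_eq (by norm_num)).1 H.abs_eq_half with rfl | rfl
    · simp [halfNeighbors]
    · simp [halfNeighbors, sub_eq_add_neg]

end IsHangingPoint

/-! ### The skeleton and the unit faces of a slice -/

lemma isClosed_skel (T : TMesh d N) (i : Fin d) : IsClosed (skel T i) :=
  (T.finite.subset fun _ hF => hF.1.1).isClosed_biUnion fun _ _ => isClosed_closure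

lemma mem_skel_iff {T : TMesh d N} {i : Fin d} {z : Fin d → ℝ} :
    z ∈ skel T i ↔ ∃ F ∈ T.entities, singDirs F = {i} ∧ z ∈ closure (toSet F) := by
  have : NeZero d := ⟨i.pos.ne'⟩
  simp only [skel, mem_iUnion, mem_ofPred_eq, exists_prop, T.mem_Hdim_sub_one_iff]
  refine ⟨?_, fun ⟨F, hF, hFi, hz⟩ => ⟨F, ⟨⟨hF, i, hFi⟩, (hFi ▸ rfl : i ∈ singDirs F)⟩, hz⟩⟩
  rintro ⟨F, ⟨⟨hF, j, hj⟩, hi⟩, hz⟩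
  obtain rfl : i = j := hj.subset hi
  exact ⟨F, hF, hj, hz⟩

lemma skel_subset_domain (T : TMesh d N) (i : Fin d) : skel T i ⊆ domain N := by
  intro z hz
  obtain ⟨F, hF, -, hzF⟩ := mem_skel_iff.1 hz
  exact T.closure_toSet_subset_domain hF hzF

lemma mem_skel_iff_mem_singDirs {T : TMesh d N} {i : Fin d} {E : Box d} (hE : E ∈ T.entities)
    {z : Fin d → ℝ} (hz : z ∈ toSet E) (hgen : ∀ l ≠ i, ∃ q : ℤ, z l ∈ Ioo (q : ℝ) (q + 1)) :
    z ∈ skel T i ↔ i ∈ singDirs E := by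
  refine ⟨fun h => ?_, fun hi => mem_skel_iff.2 ⟨E, hE, ?_, subset_closure hz⟩⟩
  · obtain ⟨F, hF, hFi, hzF⟩ := mem_skel_iff.1 h
    obtain ⟨r, hr⟩ : i ∈ singDirs F := hFi ▸ rfl
    have hEF := T.frontier_condition hE hF hz hzF i
    rw [hr, closure_singleton] at hEF
    exact ⟨r, (Nonempty.subset_singleton_iff ⟨_, mem_toSet.1 hz i⟩).1 hEF⟩
  · refine subset_antisymm (fun l hl => ?_) (singleton_subset_iff.2 hi)
    by_contra hli
    obtain ⟨q, hq⟩ := hgen l hli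
    exact (T.isComponent hE l).ne_singleton (mem_toSet.1 hz l) hq hl

/-- The center of the unit face `{z | z i = r ∧ ∀ l ≠ i, z l ∈ [q l, q l + 1]}` of the hyperplane
`z i = r`. These centers lie in no integer hyperplane other than possibly that one, so they tell
whether the face belongs to the skeleton; the entry `q i` is a dummy. -/
noncomputable def faceCenter (i : Fin d) (r : ℝ) (q : Fin d → ℤ) : Fin d → ℝ :=
  Function.update (fun l => (q l : ℝ) + 1 / 2) i r

@[simp]
lemma faceCenter_self (i : Fin d) (r : ℝ) (q : Fin d → ℤ) : faceCenter i r q i = r :=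
  Function.update_self ..

lemma faceCenter_of_ne {i l : Fin d} (hl : l ≠ i) (r : ℝ) (q : Fin d → ℤ) :
    faceCenter i r q l = q l + 1 / 2 :=
  Function.update_of_ne hl ..

lemma faceCenter_mem_Ioo {i l : Fin d} (hl : l ≠ i) (r : ℝ) (q : Fin d → ℤ) :
    faceCenter i r q l ∈ Ioo (q l : ℝ) (q l + 1) := by
  rw [faceCenter_of_ne hl]
  constructor <;> linarith

lemma faceCenter_update_self (i : Fin d) (r : ℝ) (q : Fin d → ℤ) (c : ℤ) :
    faceCenter i r (Function.update q i c) = faceCenter i r q := by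
  ext l
  rcases eq_or_ne l i with rfl | hl
  · simp
  · simp [faceCenter_of_ne hl, hl]

lemma faceCenter_update_of_ne {i k : Fin d} (hk : k ≠ i) (r : ℝ) (q : Fin d → ℤ) (c : ℤ) :
    faceCenter i r (Function.update q k c) =
      Function.update (faceCenter i r q) k ((c : ℝ) + 1 / 2) := by
  rw [faceCenter, faceCenter, Function.update_comm hk.symm]
  congr 1
  ext l
  rcases eq_or_ne l k with rfl | hlk <;> simp [*]

lemma mem_skel_of_faceCenter_mem {T : TMesh d N} {i : Fin d} {z : Fin d → ℝ} {q : Fin d → ℤ}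
    (hz : ∀ l ≠ i, z l ∈ Icc (q l : ℝ) (q l + 1)) (hq : faceCenter i (z i) q ∈ skel T i) :
    z ∈ skel T i := by
  obtain ⟨F, hF, hFi, hqF⟩ := mem_skel_iff.1 hq
  refine mem_skel_iff.2 ⟨F, hF, hFi, mem_closure_toSet.2 fun l => ?_⟩
  have hl := mem_closure_toSet.1 hqF l
  rcases eq_or_ne l i with rfl | hli
  · simpa using hl
  · have hgen := faceCenter_mem_Ioo hli (z i) q
    have hS := T.isComponent hF l
    exact hS.Icc_subset_closure (hS.mem_of_mem_closure hl hgen) hgen (hz l hli)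

lemma IsComponent.exists_add_half_mem {S : Set ℝ} (hS : IsComponent S) (hne : ¬ ∃ r, S = {r})
    {y : ℝ} (hy : y ∈ closure S) :
    ∃ q : ℤ, y ∈ Icc (q : ℝ) (q + 1) ∧ (q : ℝ) + 1 / 2 ∈ S := by
  obtain ⟨a, b, hab, rfl⟩ := hS.exists_eq_Ioo hne
  rw [closure_Ioo (by exact_mod_cast hab.ne)] at hy
  have habR : (a : ℝ) + 1 ≤ b := by exact_mod_cast hab
  rcases hy.2.eq_or_lt with rfl | hyb
  · exact ⟨b - 1, by push_cast; constructor <;> linarith, by push_cast; constructor <;> linarith⟩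
  · have haf : (a : ℝ) ≤ ⌊y⌋ := by exact_mod_cast Int.le_floor.2 hy.1
    have hfb : (⌊y⌋ : ℝ) + 1 ≤ b := by exact_mod_cast Int.floor_lt.2 hyb
    exact ⟨⌊y⌋, ⟨Int.floor_le y, (Int.lt_floor_add_one y).le⟩, by constructor <;> linarith⟩

lemma exists_faceCenter_mem_skel {T : TMesh d N} {i : Fin d} {z : Fin d → ℝ}
    (hz : z ∈ skel T i) :
    ∃ q : Fin d → ℤ, (∀ l ≠ i, z l ∈ Icc (q l : ℝ) (q l + 1)) ∧
      faceCenter i (z i) q ∈ skel T i := by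
  obtain ⟨F, hF, hFi, hzF⟩ := mem_skel_iff.1 hz
  rw [mem_closure_toSet] at hzF
  have hq : ∀ l, ∃ q : ℤ, l ≠ i → z l ∈ Icc (q : ℝ) (q + 1) ∧ (q : ℝ) + 1 / 2 ∈ F l := fun l => by
    by_cases hl : l = i
    · exact ⟨0, fun h => absurd hl h⟩
    · obtain ⟨q, hq⟩ :=
        (T.isComponent hF l).exists_add_half_mem (fun h => hl (hFi.subset h)) (hzF l)
      exact ⟨q, fun _ => hq⟩
  choose q hq using hq
  refine ⟨q, fun l hl => (hq l hl).1, mem_skel_iff.2 ⟨F, hF, hFi, mem_closure_toSet.2 fun l => ?_⟩⟩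
  rcases eq_or_ne l i with rfl | hl
  · simpa using hzF l
  · rw [faceCenter_of_ne hl]
    exact subset_closure (hq l hl).2

/-! ### Walking between unit faces -/

lemma exists_eq_of_mem_Icc_of_ne {q q' : ℤ} (hne : q' ≠ q) {z : ℝ} (hz : z ∈ Icc (q : ℝ) (q + 1))
    (hz' : z ∈ Icc (q' : ℝ) (q' + 1)) :
    ∃ m : ℤ, ∃ σ : ℝ, |σ| = 1 / 2 ∧ z = m ∧
      (q : ℝ) + 1 / 2 = m - σ ∧ (q' : ℝ) + 1 / 2 = m + σ := by
  have h₁ : q ≤ q' + 1 := by exact_mod_cast hz.1.trans hz'.2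
  have h₂ : q' ≤ q + 1 := by exact_mod_cast hz'.1.trans hz.2
  obtain rfl | rfl : q' = q + 1 ∨ q = q' + 1 := by omega
  · refine ⟨q + 1, 1 / 2, by norm_num, ?_, ?_, ?_⟩
    · push_cast at hz' ⊢; exact le_antisymm hz.2 hz'.1
    · push_cast; ring
    · push_cast; ring
  · refine ⟨q' + 1, -(1 / 2), by norm_num, ?_, ?_, ?_⟩
    · push_cast at hz ⊢; exact le_antisymm hz'.2 hz.1
    · push_cast; ring
    · push_cast; ring

lemma exists_update_step {ι α : Type*} [Finite ι] [DecidableEq ι] {p : (ι → α) → Prop}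
    {f g : ι → α} (hf : p f) (hg : ¬ p g) :
    ∃ (h : ι → α) (k : ι), (∀ l, h l = f l ∨ h l = g l) ∧ h k = f k ∧ p h ∧
      ¬ p (Function.update h k (g k)) := by
  have := Fintype.ofFinite ι
  suffices H : ∀ s : Finset ι, ¬ p (s.piecewise g f) → _ from
    H Finset.univ (by simpa using hg)
  intro s hs
  induction s using Finset.induction_on with
  | empty => exact absurd (by simpa using hf) hs
  | insert k s hk ih =>
    by_cases hp : p (s.piecewise g f)
    · refine ⟨s.piecewise g f, k, fun l => ?_, by simp [hk], hp, ?_⟩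
      · by_cases hl : l ∈ s <;> simp [hl]
      · rwa [← Finset.piecewise_insert]
    · exact ih hp

lemma exists_isHangingPoint {T : TMesh d N} {i k : Fin d} (hki : k ≠ i) {r σ : ℝ} {m : ℤ}
    {q : Fin d → ℤ} {c : ℤ} (hσ : |σ| = 1 / 2) (hqm : (q k : ℝ) + 1 / 2 = m - σ)
    (hcm : (c : ℝ) + 1 / 2 = m + σ) (hq : faceCenter i r q ∈ skel T i)
    (hc : faceCenter i r (Function.update q k c) ∈ domain N \ skel T i) :
    ∃ J F Q, IsHangingPoint T (Function.update (faceCenter i r q) k m) i k m σ J F Q := by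
  obtain ⟨F, hF, hqF⟩ := T.exists_entity (skel_subset_domain T i hq)
  obtain ⟨Q, hQ, hcQ⟩ := T.exists_entity hc.1
  have hFi := (mem_skel_iff_mem_singDirs hF hqF fun l hl => ⟨_, faceCenter_mem_Ioo hl ..⟩).1 hq
  have hQi : i ∉ singDirs Q := fun h => hc.2
    ((mem_skel_iff_mem_singDirs hQ hcQ fun l hl => ⟨_, faceCenter_mem_Ioo hl ..⟩).2 h)
  set h := Function.update (faceCenter i r q) k (m : ℝ) with hh
  have hhF : Function.update h k (m - σ) ∈ toSet F := by
    rwa [hh, Function.update_idem, ← hqm, ← faceCenter_update_of_ne hki, Function.update_eq_self]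
  have hhQ : Function.update h k (m + σ) ∈ toSet Q := by
    rwa [hh, Function.update_idem, ← hcm, ← faceCenter_update_of_ne hki]
  have hhk : h k = m := Function.update_self ..
  obtain ⟨J, hJ, hhJ⟩ := T.exists_entity <| T.closure_toSet_subset_domain hQ <|
    mem_closure_of_update_mem (T.isComponent hQ k) hhk hσ hhQ
  refine ⟨J, F, Q, hki.symm, hσ, hhk, fun l hli hlk => ⟨q l, ?_⟩,
    hF, hQ, hJ, hhF, hhQ, hhJ, hFi, hQi⟩
  rw [hh, Function.update_of_ne hlk]
  exact faceCenter_mem_Ioo hli ..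

lemma exists_tjunction_of_update {T : TMesh d N} {i k : Fin d} (hki : k ≠ i) {z : Fin d → ℝ}
    {q : Fin d → ℤ} {c : ℤ} (hz : ∀ l ≠ i, z l ∈ Icc (q l : ℝ) (q l + 1))
    (hzc : z k ∈ Icc (c : ℝ) (c + 1)) (hq : faceCenter i (z i) q ∈ skel T i)
    (hc : faceCenter i (z i) (Function.update q k c) ∈ domain N \ skel T i) :
    ∃ J Q : Box d, IsTJunction T J ∧ TJData T J Q i k ∧ z ∈ closure (toSet J) ∧
      (c : ℝ) + 1 / 2 ∈ Q k := by
  have hcq : c ≠ q k := fun h => hc.2 (by rwa [h, Function.update_eq_self])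
  obtain ⟨m, σ, hσ, hzm, hqm, hcm⟩ := exists_eq_of_mem_Icc_of_ne hcq (hz k hki) hzc
  obtain ⟨J, F, Q, H⟩ := exists_isHangingPoint hki hσ hqm hcm hq hc
  refine ⟨J, Q, H.isTJunction, H.tjData, mem_closure_toSet.2 fun l => ?_, ?_⟩
  · have hl := mem_toSet.1 H.mem_mid l
    rcases eq_or_ne l k with rfl | hlk
    · rw [Function.update_self, ← hzm] at hl
      exact subset_closure hl
    rw [Function.update_of_ne hlk] at hl
    rcases eq_or_ne l i with rfl | hli
    · exact subset_closure (by simpa using hl)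
    · exact (T.isComponent H.mid_mem l).Icc_subset_closure hl (faceCenter_mem_Ioo hli ..) (hz l hli)
  · rw [hcm]
    simpa using mem_toSet.1 H.mem_right k

/-- Changing the coordinates of `q₀` into those of `q₁` one at a time, some step leaves the
skeleton. -/
lemma exists_tjunction_of_faceCenter {T : TMesh d N} {i : Fin d} {z : Fin d → ℝ}
    {q₀ q₁ : Fin d → ℤ} (hz₀ : ∀ l ≠ i, z l ∈ Icc (q₀ l : ℝ) (q₀ l + 1))
    (hz₁ : ∀ l ≠ i, z l ∈ Icc (q₁ l : ℝ) (q₁ l + 1)) (hq₀ : faceCenter i (z i) q₀ ∈ skel T i)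
    (hq₁ : faceCenter i (z i) q₁ ∈ domain N \ skel T i) :
    ∃ J Q : Box d, ∃ k ≠ i, IsTJunction T J ∧ TJData T J Q i k ∧ z ∈ closure (toSet J) ∧
      q₁ k ≠ q₀ k ∧ (q₁ k : ℝ) + 1 / 2 ∈ Q k := by
  obtain ⟨q, k, hq, hqk, hqskel, hqskel'⟩ :=
    exists_update_step (p := fun q => faceCenter i (z i) q ∈ skel T i) hq₀ hq₁.2
  have hki : k ≠ i := by
    rintro rfl
    exact hqskel' (by rwa [faceCenter_update_self])
  have hqz : ∀ l ≠ i, z l ∈ Icc (q l : ℝ) (q l + 1) := fun l hl =>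
    (hq l).elim (fun h => h ▸ hz₀ l hl) (fun h => h ▸ hz₁ l hl)
  have hdom : faceCenter i (z i) (Function.update q k (q₁ k)) ∈ domain N := by
    intro l _
    have hl₁ := hq₁.1 l (mem_univ l)
    rcases eq_or_ne l i with rfl | hli
    · simpa using hl₁
    have hl₀ := skel_subset_domain T i hq₀ l (mem_univ l)
    rw [faceCenter_of_ne hli] at hl₀ hl₁ ⊢
    rcases eq_or_ne l k with rfl | hlk
    · rwa [Function.update_self]
    · rw [Function.update_of_ne hlk]
      rcases hq l with h | h <;> rwa [h]
  obtain ⟨J, Q, hJ, hJQ, hzJ, hQk⟩ :=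
    exists_tjunction_of_update hki hqz (hz₁ k hki) hqskel ⟨hdom, hqskel'⟩
  refine ⟨J, Q, k, hki, hJ, hJQ, hzJ, fun h => hqskel' ?_, hQk⟩
  rwa [h, ← hqk, Function.update_eq_self]

/-! ### Segments crossing the boundary of the skeleton -/

lemma exists_mem_closure_sdiff {X : Type*} [TopologicalSpace X] {s S : Set X}
    (hs : IsPreconnected s) (hS : IsClosed S) (hsS : (s ∩ S).Nonempty)
    (hsS' : (s \ S).Nonempty) : ∃ z ∈ s ∩ S, z ∈ closure (s \ S) := by
  obtain ⟨z, hzs, hzS, hz⟩ := isPreconnected_closed_iff.1 hs S (closure (s \ S)) hS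
    isClosed_closure (fun z hz => (em (z ∈ S)).imp id fun hzS => subset_closure ⟨hz, hzS⟩) hsS
    (hsS'.mono fun z hz => ⟨hz.1, subset_closure hz⟩)
  exact ⟨z, ⟨hzs, hzS⟩, hz⟩

lemma eventually_exists_mem_Icc {q₀ : ℤ} {z : ℝ} (hz : z ∈ Icc (q₀ : ℝ) (q₀ + 1)) :
    ∀ᶠ v in nhds z, ∃ q : ℤ, z ∈ Icc (q : ℝ) (q + 1) ∧ v ∈ Icc (q : ℝ) (q + 1) ∧
      (q = q₀ ∨ v ∈ Ioo (q : ℝ) (q + 1)) := by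
  have hnear : ∀ᶠ v in nhds z, v ∈ Ioo (z - 1) (z + 1) :=
    Ioo_mem_nhds (sub_one_lt z) (lt_add_one z)
  rcases eq_endpoints_or_mem_Ioo_of_mem_Icc hz with rfl | rfl | hz
  · filter_upwards [hnear] with v hv
    rcases le_or_gt (q₀ : ℝ) v with h | h
    · exact ⟨q₀, hz, ⟨h, hv.2.le⟩, .inl rfl⟩
    · have hv' : v ∈ Ioo (((q₀ - 1 : ℤ) : ℝ)) ((q₀ - 1 : ℤ) + 1) := by
        push_cast; exact ⟨hv.1, by linarith⟩
      exact ⟨q₀ - 1, by push_cast; constructor <;> linarith, Ioo_subset_Icc_self hv', .inr hv'⟩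
  · filter_upwards [hnear] with v hv
    rcases le_or_gt v (q₀ + 1) with h | h
    · exact ⟨q₀, hz, ⟨by linarith [hv.1], h⟩, .inl rfl⟩
    · have hv' : v ∈ Ioo (((q₀ + 1 : ℤ) : ℝ)) ((q₀ + 1 : ℤ) + 1) := by
        push_cast; exact ⟨h, hv.2⟩
      exact ⟨q₀ + 1, by push_cast; constructor <;> linarith, Ioo_subset_Icc_self hv', .inr hv'⟩
  · filter_upwards [Ioo_mem_nhds hz.1 hz.2] with v hv
    exact ⟨q₀, Ioo_subset_Icc_self hz, Ioo_subset_Icc_self hv, .inl rfl⟩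

lemma apply_mem_segment {u w y : Fin d → ℝ} (hy : y ∈ segment ℝ u w) (k : Fin d) :
    y k ∈ segment ℝ (u k) (w k) := by
  obtain ⟨a, b, ha, hb, hab, rfl⟩ := hy
  exact ⟨a, b, ha, hb, hab, rfl⟩

lemma faceCenter_mem_domain {i : Fin d} {r : ℝ} {q₀ q : Fin d → ℤ} {v : Fin d → ℝ}
    (hq₀ : faceCenter i r q₀ ∈ domain N) (hv : v ∈ domain N)
    (hq : ∀ l ≠ i, q l = q₀ l ∨ v l ∈ Ioo (q l : ℝ) (q l + 1)) : faceCenter i r q ∈ domain N := by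
  intro l _
  have hl := hq₀ l (mem_univ l)
  rcases eq_or_ne l i with rfl | hli
  · simpa using hl
  rw [faceCenter_of_ne hli] at hl ⊢
  rcases hq l hli with h | h
  · rwa [h]
  · have hvl := hv l (mem_univ l)
    have h₀ : (0 : ℤ) < q l + 1 := by exact_mod_cast hvl.1.trans_lt h.2
    have h₁ : q l < (N l : ℤ) := by exact_mod_cast h.1.trans_le hvl.2
    have h₀' : (0 : ℝ) ≤ q l := by exact_mod_cast Int.lt_add_one_iff.1 h₀
    have h₁' : (q l : ℝ) + 1 ≤ N l := by exact_mod_cast h₁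
    constructor <;> linarith

lemma exists_tjunction_near {T : TMesh d N} {i : Fin d} {z : Fin d → ℝ} (hz : z ∈ skel T i) :
    ∀ᶠ v in nhds z, v i = z i → v ∈ domain N \ skel T i →
      ∃ J Q : Box d, ∃ k, IsTJunction T J ∧ TJData T J Q i k ∧ z ∈ closure (toSet J) ∧
        v k ∈ Q k ∧ v k ≠ z k := by
  obtain ⟨q₀, hzq₀, hq₀⟩ := exists_faceCenter_mem_skel hz
  have hev : ∀ᶠ v in nhds z, ∀ l, l ≠ i → ∃ q : ℤ, z l ∈ Icc (q : ℝ) (q + 1) ∧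
      v l ∈ Icc (q : ℝ) (q + 1) ∧ (q = q₀ l ∨ v l ∈ Ioo (q : ℝ) (q + 1)) := by
    refine Filter.eventually_all.2 fun l => ?_
    by_cases hl : l = i
    · exact .of_forall fun _ h => absurd hl h
    · exact ((continuous_apply l).continuousAt.eventually
        (eventually_exists_mem_Icc (hzq₀ l hl))).mono fun _ h _ => h
  filter_upwards [hev] with v hv hvi hvskel
  choose! q₁ hzq₁ hvq₁ hq₁ using hv
  have hskel : faceCenter i (z i) q₁ ∉ skel T i := fun h =>
    hvskel.2 (mem_skel_of_faceCenter_mem hvq₁ (hvi ▸ h))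
  have hdom : faceCenter i (z i) q₁ ∈ domain N :=
    faceCenter_mem_domain (skel_subset_domain T i hq₀) hvskel.1 hq₁
  obtain ⟨J, Q, k, hki, hJ, hJQ, hzJ, hk, hQk⟩ :=
    exists_tjunction_of_faceCenter hzq₀ hzq₁ hq₀ ⟨hdom, hskel⟩
  have hvk : v k ∈ Ioo (q₁ k : ℝ) (q₁ k + 1) := (hq₁ k hki).resolve_left hk
  have hQ := T.isComponent hJQ.1.1 k
  obtain ⟨m, σ, hσ, hzm, -⟩ := exists_eq_of_mem_Icc_of_ne hk (hzq₀ k hki) (hzq₁ k hki)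
  refine ⟨J, Q, k, hJ, hJQ, hzJ, hQ.Ioo_subset hQk ⟨by linarith, by linarith⟩ hvk, fun h => ?_⟩
  rw [h, hzm] at hvk
  have h₁ : q₁ k < m := by exact_mod_cast hvk.1
  have h₂ : m < q₁ k + 1 := by exact_mod_cast hvk.2
  omega

lemma exists_tjunction_on_segment {T : TMesh d N} {i : Fin d} {u w : Fin d → ℝ}
    (hu : u ∈ domain N \ skel T i) (hw : w ∈ skel T i) (hi : u i = w i) :
    ∃ J Q : Box d, ∃ k, IsTJunction T J ∧ TJData T J Q i k ∧
      (closure (toSet J) ∩ segment ℝ u w).Nonempty ∧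
      (Q k ∩ segment ℝ (u k) (w k)).Nonempty ∧ u k ≠ w k := by
  have hdom : segment ℝ u w ⊆ domain N := (convex_pi fun _ _ => convex_Icc _ _).segment_subset hu.1
    (skel_subset_domain T i hw)
  have happly {y : Fin d → ℝ} {k : Fin d} (hk : u k = w k) (hy : y ∈ segment ℝ u w) :
      y k = w k := by
    simpa [hk, segment_same] using apply_mem_segment hy k
  obtain ⟨z, ⟨hzs, hzS⟩, hz⟩ := exists_mem_closure_sdiff (convex_segment u w).isPreconnected
    (isClosed_skel T i) ⟨w, right_mem_segment ℝ u w, hw⟩ ⟨u, left_mem_segment ℝ u w, hu.2⟩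
  obtain ⟨v, ⟨hvs, hvS⟩, hv⟩ :=
    ((mem_closure_iff_frequently.1 hz).and_eventually (exists_tjunction_near hzS)).exists
  obtain ⟨J, Q, k, hJ, hJQ, hzJ, hvQ, hvk⟩ :=
    hv ((happly hi hvs).trans (happly hi hzs).symm) ⟨hdom hvs, hvS⟩
  exact ⟨J, Q, k, hJ, hJQ, ⟨z, hzJ, hzs⟩, ⟨v k, hvQ, apply_mem_segment hvs k⟩,
    fun hk => hvk ((happly hk hvs).trans (happly hk hzs).symm)⟩

lemma exists_tjunction_of_not_iff {T : TMesh d N} {i : Fin d} {a x : Fin d → ℝ}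
    (ha : a ∈ domain N) (hx : x ∈ domain N) (hi : a i = x i)
    (hax : ¬ (a ∈ skel T i ↔ x ∈ skel T i)) :
    ∃ J Q : Box d, ∃ k, IsTJunction T J ∧ TJData T J Q i k ∧
      (closure (toSet J) ∩ segment ℝ a x).Nonempty ∧
      (Q k ∩ segment ℝ (a k) (x k)).Nonempty ∧ a k ≠ x k := by
  by_cases haS : a ∈ skel T i
  · have hxS : x ∉ skel T i := fun h => hax (iff_of_true haS h)
    simpa only [segment_symm ℝ x a, segment_symm ℝ (x _) (a _), ne_comm] using
      exists_tjunction_on_segment ⟨hx, hxS⟩ haS hi.symm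
  · exact exists_tjunction_on_segment ⟨ha, haS⟩
      (by_contra fun h => hax (iff_of_false haS h)) hi

/-! ### Anchors and their projections -/

lemma apply_mem_of_mem_proj {A : Box d} {i : Fin d} {n : ℕ} {a : Fin d → ℝ}
    (ha : a ∈ toSet (proj A i n)) {k : Fin d} (hk : k ≠ i) : a k ∈ A k := by
  simpa only [proj, Function.update_of_ne hk] using mem_toSet.1 ha k

lemma toSet_proj_subset_slice {T : TMesh d N} {A : Box d} (hA : A ∈ T.entities) {i : Fin d}
    {n : ℕ} (hn : n ≤ N i) : toSet (proj A i n) ⊆ slice N i n := by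
  intro a ha
  have hai : a i = n := by simpa [proj] using mem_toSet.1 ha i
  refine ⟨fun k _ => ?_, hai⟩
  rcases eq_or_ne k i with rfl | hk
  · rw [hai]
    exact ⟨Nat.cast_nonneg n, by exact_mod_cast hn⟩
  · exact T.subset_Icc hA k (apply_mem_of_mem_proj ha hk)

lemma toSet_proj_nonempty {T : TMesh d N} {A : Box d} (hA : A ∈ T.entities) (i : Fin d)
    (n : ℕ) : (toSet (proj A i n)).Nonempty := by
  refine univ_pi_nonempty_iff.2 fun k => ?_
  rcases eq_or_ne k i with rfl | hk
  · simp [proj]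
  · rw [proj, Function.update_of_ne hk]
    exact (T.isComponent hA k).nonempty

/-- Both kinds of anchors in the definition of `ATJ` have `x` in their support; take one of the kind
opposite to `x`. -/
lemma exists_anchor_of_mem_ATJ {T : TMesh d N} {p : Fin d → ℕ} {i : Fin d} {n : ℕ}
    {x : Fin d → ℝ} (hx : x ∈ ATJ T p i n) :
    ∃ A, IsAnchor p T A ∧ x ∈ suppA T p A ∧
      ∃ a ∈ toSet (proj A i n), a ∈ slice N i n ∧ ¬ (a ∈ skel T i ↔ x ∈ skel T i) := by
  obtain ⟨⟨hxn, hx₁⟩, hx₂⟩ := hx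
  have hnN : n ≤ N i := by
    have := (hxn.1 i (mem_univ i)).2
    rw [hxn.2] at this
    exact_mod_cast this
  simp only [mem_iUnion, mem_ofPred_eq, exists_prop] at hx₁ hx₂
  by_cases hxS : x ∈ skel T i
  · obtain ⟨A, ⟨hA, hgv⟩, hxA⟩ := hx₂
    obtain ⟨a, ha, haS⟩ : ∃ a ∈ toSet (proj A i n), a ∉ skel T i := by
      by_contra! h
      exact hgv ⟨hnN, h⟩
    exact ⟨A, hA, hxA, a, ha, toSet_proj_subset_slice hA.1 hnN ha, fun h => haS (h.2 hxS)⟩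
  · obtain ⟨A, ⟨hA, hgv⟩, hxA⟩ := hx₁
    obtain ⟨a, ha⟩ := toSet_proj_nonempty hA.1 i n
    exact ⟨A, hA, hxA, a, ha, toSet_proj_subset_slice hA.1 hnN ha, fun h => hxS (h.1 (hgv.2 ha))⟩

theorem atj_has_tjunction_general {p : Fin d → ℕ} (T : TMesh d N) {i : Fin d} {n : ℕ}
    {x : Fin d → ℝ} (hx : x ∈ ATJ T p i n) :
    ∃ A : Box d, IsAnchor p T A ∧ x ∈ suppA T p A ∧
    ∃ J Q : Box d, ∃ k : Fin d, IsTJunction T J ∧ TJData T J Q i k ∧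
      (closure (toSet J) ∩ convexHull ℝ (toSet (proj A i n) ∪ {x})).Nonempty ∧
      (Q k ∩ convexHull ℝ (A k ∪ {x k})).Nonempty ∧ (∃ y ∈ A k, y ≠ x k) := by
  obtain ⟨A, hA, hxA, a, ha, han, hax⟩ := exists_anchor_of_mem_ATJ hx
  have hxn := hx.1.1
  obtain ⟨J, Q, k, hJ, hJQ, hJseg, hQseg, hne⟩ :=
    exists_tjunction_of_not_iff han.1 hxn.1 (han.2.trans hxn.2.symm) hax
  have hak : a k ∈ A k := apply_mem_of_mem_proj ha hJQ.2.2.2.1.symm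
  refine ⟨A, hA, hxA, J, Q, k, hJ, hJQ, hJseg.mono (inter_subset_inter_right _ ?_),
    hQseg.mono (inter_subset_inter_right _ ?_), a k, hak, hne⟩
  · exact segment_subset_convexHull (.inl ha) (.inr rfl)
  · exact segment_subset_convexHull (.inl hak) (.inr rfl)

end TSpline

/-- Every point of a nonempty abstract T-junction extension `ATJ_i(n)`
lies in the support of an anchor `A`, and there is an `i`-orthogonal T-junction,
together with its associated cell, between that point and `P_{i,n}(A)`. -/
theorem TSpline.atj_has_tjunction
    {d : ℕ} {N p : Fin d → ℕ} (T : TSpline.TMesh d N)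
    (hadm : TSpline.Admissible p T)
    (i : Fin d) (n : ℕ) (hn : n ≤ N i)
    (hne : (TSpline.ATJ T p i n).Nonempty)
    (x : Fin d → ℝ) (hx : x ∈ TSpline.ATJ T p i n) :
    ∃ A : TSpline.Box d, TSpline.IsAnchor p T A ∧ x ∈ TSpline.suppA T p A ∧
    ∃ J Q : TSpline.Box d, ∃ k : Fin d,
      TSpline.IsTJunction T J ∧ TSpline.TJData T J Q i k ∧
      (closure (TSpline.toSet J) ∩
        convexHull ℝ (TSpline.toSet (TSpline.proj A i n) ∪ {x})).Nonempty ∧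
      (Q k ∩ convexHull ℝ (A k ∪ {x k})).Nonempty ∧
      (∃ y ∈ A k, y ≠ x k) := by
  exact TSpline.atj_has_tjunction_general T hx
end

section
/- Let d ≥ 3 and let 𝒯 be an admissible T-mesh of Ω with degrees p ∈ ℕ^d. Then 𝒯 is abstractly analysis-suitable (AAS) if and only if it is strongly dual-compatible (SDC). -/
/-!
At a point `x`, call two anchors whose supports contain `x` *in agreement in direction `k`* if
`x k` is a knot of both or of neither. This is an equivalence relation for each `k`, and both
properties say something about the common points of supports:

* `x ∈ ATJ_k` iff the anchors at `x` are not all in agreement in direction `k`, so AAS means that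
  at every `x` and for all `i ≠ j`, full agreement holds in direction `i` or in direction `j`;
* `v_k(A) ⋈ v_k(B)` iff `A` and `B` agree in direction `k` at every coordinate common to their
  supports. Supports being boxes, coordinates in different directions can be chosen
  independently, so SDC means that at every `x` and for all `i ≠ j`, each *pair* of anchors at `x`
  agrees in direction `i` or in direction `j`.

The two conditions coincide because, as for subgroups of a group, the union of two equivalence
relations is the full relation only if one of them already is.
-/

open Set

namespace TSpline

section Combinatorics

lemma forall_or_iff_of_equivalence {α : Type*} {S : Set α} {r s : α → α → Prop}
    (hr : Equivalence r) (hs : Equivalence s) :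
    (∀ a ∈ S, ∀ b ∈ S, r a b ∨ s a b) ↔
      (∀ a ∈ S, ∀ b ∈ S, r a b) ∨ (∀ a ∈ S, ∀ b ∈ S, s a b) := by
  refine ⟨fun h => or_iff_not_imp_left.2 fun hne => ?_,
    fun h a ha b hb => h.imp (fun h => h a ha b hb) (fun h => h a ha b hb)⟩
  push Not at hne
  obtain ⟨a, ha, b, hb, hab⟩ := hne
  have s_base : ∀ c ∈ S, s c a := by
    intro c hc
    refine (h c hc a ha).elim (fun hca => ?_) id
    have hcb : ¬ r c b := fun hcb => hab (hr.trans (hr.symm hca) hcb)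
    exact hs.trans ((h c hc b hb).resolve_left hcb) (hs.symm ((h a ha b hb).resolve_left hab))
  exact fun c hc e he => hs.trans (s_base c hc) (hs.symm (s_base e he))

lemma card_sub_one_le_ncard_iff {ι : Type*} [Finite ι] (s : Set ι) :
    Nat.card ι - 1 ≤ s.ncard ↔ Pairwise fun i j => i ∈ s ∨ j ∈ s := by
  have hsub : sᶜ.Subsingleton ↔ Pairwise fun i j => i ∈ s ∨ j ∈ s :=
    ⟨fun h i j hij => by
        by_contra! hn
        exact hij (h hn.1 hn.2),
      fun h i hi j hj => by
        by_contra hij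
        exact (h hij).elim hi hj⟩
  rw [← hsub, ← ncard_le_one_iff_subsingleton, ← ncard_add_ncard_compl s]
  omega

lemma forall_mem_pi_pairwise_or_iff {ι : Type*} {α : ι → Type*} {S : ∀ k, Set (α k)}
    {P : ∀ k, α k → Prop} :
    (∀ x ∈ univ.pi S, Pairwise fun i j => P i (x i) ∨ P j (x j)) ↔
      univ.pi S = ∅ ∨ Pairwise fun i j => (∀ t ∈ S i, P i t) ∨ (∀ t ∈ S j, P j t) := by
  classical
  constructor
  · refine fun h => or_iff_not_imp_left.2 fun hne i j hij => ?_
    obtain ⟨x, hx⟩ := nonempty_iff_ne_empty.2 hne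
    by_contra! hbad
    obtain ⟨⟨t, ht, hPt⟩, u, hu, hPu⟩ := hbad
    have hy : Function.update (Function.update x i t) j u ∈ univ.pi S :=
      (update_mem_pi_iff_of_mem ((update_mem_pi_iff_of_mem hx).2 fun _ => ht)).2 fun _ => hu
    have hP := h _ hy hij
    simp only [Function.update_of_ne hij, Function.update_self] at hP
    exact hP.elim hPt hPu
  · rintro (hempty | h) x hx i j hij
    · exact absurd hx (hempty ▸ notMem_empty x)
    · exact (h hij).imp (fun h => h _ (hx i (mem_univ i))) (fun h => h _ (hx j (mem_univ j)))

end Combinatorics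

section KnotVectors

variable {V V₁ V₂ G : Set ℕ}

lemma mem_convOf_iff {r : ℝ} : r ∈ convOf V ↔ ∃ a ∈ V, ∃ b ∈ V, (a : ℝ) ≤ r ∧ r ≤ b := by
  constructor
  · refine fun hr => convexHull_min (t := {r | ∃ a ∈ V, ∃ b ∈ V, (a : ℝ) ≤ r ∧ r ≤ b}) ?_ ?_ hr
    · exact image_subset_iff.2 fun n hn => ⟨n, hn, n, hn, le_rfl, le_rfl⟩
    · refine OrdConnected.convex ⟨?_⟩
      rintro x ⟨a, ha, -, -, hax, -⟩ y ⟨-, -, b, hb, -, hyb⟩ z ⟨hxz, hzy⟩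
      exact ⟨a, ha, b, hb, hax.trans hxz, hzy.trans hyb⟩
  · rintro ⟨a, ha, b, hb, har, hrb⟩
    exact (convex_convexHull ℝ _).ordConnected.out
      (subset_convexHull ℝ _ (mem_image_of_mem _ ha))
      (subset_convexHull ℝ _ (mem_image_of_mem _ hb)) ⟨har, hrb⟩

lemma natCast_mem_convOf_iff {n : ℕ} :
    (n : ℝ) ∈ convOf V ↔ ∃ a ∈ V, ∃ b ∈ V, a ≤ n ∧ n ≤ b := by
  simp only [mem_convOf_iff, Nat.cast_le]

lemma natCast_mem_convOf {n : ℕ} (hn : n ∈ V) : (n : ℝ) ∈ convOf V :=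
  subset_convexHull ℝ _ (mem_image_of_mem _ hn)

lemma isBlockOf_iff :
    IsBlockOf V G ↔ V ⊆ G ∧ V.Finite ∧ ∀ n : ℕ, (n : ℝ) ∈ convOf V → n ∈ G → n ∈ V := by
  simp only [IsBlockOf, natCast_mem_convOf_iff]
  grind

lemma IsBlockOf.mem_iff (h : IsBlockOf V G) {n : ℕ} (hn : (n : ℝ) ∈ convOf V) :
    n ∈ V ↔ n ∈ G :=
  ⟨fun hV => h.1 hV, (isBlockOf_iff.1 h).2.2 n hn⟩

/-- The union `V₁ ∪ V₂` is the canonical candidate for a common knot vector. -/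
lemma overlaps_iff (h₁ : V₁.Finite) (h₂ : V₂.Finite) :
    Overlaps V₁ V₂ ↔
      ∀ n : ℕ, (n : ℝ) ∈ convOf V₁ → (n : ℝ) ∈ convOf V₂ → (n ∈ V₁ ↔ n ∈ V₂) := by
  constructor
  · rintro ⟨W, -, hW₁, hW₂⟩ n hn₁ hn₂
    rw [hW₁.mem_iff hn₁, hW₂.mem_iff hn₂]
  · intro h
    refine ⟨V₁ ∪ V₂, h₁.union h₂, isBlockOf_iff.2 ⟨subset_union_left, h₁, fun n hn₁ hn => ?_⟩,
      isBlockOf_iff.2 ⟨subset_union_right, h₂, fun n hn₂ hn => ?_⟩⟩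
    · exact hn.elim id fun hn₂ => (h n hn₁ (natCast_mem_convOf hn₂)).2 hn₂
    · exact hn.elim (fun hn₁ => (h n (natCast_mem_convOf hn₁) hn₂).1 hn₁) id

end KnotVectors

section Anchors

variable {d : ℕ} {N p : Fin d → ℕ} {T : TMesh d N} {A B : Box d} {x : Fin d → ℝ}

/-- A point of the support rules out the default value `∅` of `anchorKV`, so the chosen set is a
genuine local knot vector. -/
lemma isBlockOf_anchorKV (hx : x ∈ suppA T p A) (k : Fin d) :
    IsBlockOf (anchorKV T p A k) (gv T k A) := by
  obtain ⟨a, ha, -⟩ := mem_convOf_iff.1 (hx k (mem_univ k))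
  unfold anchorKV at ha ⊢
  split_ifs at ha ⊢ with h
  · exact h.choose_spec.1
  · exact ha.elim

lemma suppA_subset_domain : suppA T p A ⊆ domain N := by
  intro x hx k _
  obtain ⟨a, -, b, hb, hax, hxb⟩ := mem_convOf_iff.1 (hx k (mem_univ k))
  have hbN : b ≤ N k := ((isBlockOf_anchorKV hx k).1 hb).1
  exact ⟨(Nat.cast_nonneg a).trans hax, hxb.trans (Nat.cast_le.2 hbN)⟩

/-- The anchors whose index support contains `x`; these are the anchors that AAS and SDC
compare at `x`. -/
def anchorsAt (T : TMesh d N) (p : Fin d → ℕ) (x : Fin d → ℝ) : Set (Box d) :=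
  {A | IsAnchor p T A ∧ x ∈ suppA T p A}

/-- Agreement of the global knot vectors of `A` and `B` in direction `k` about the coordinate
`t`. It is a condition on integers only: for other `t` it holds vacuously. -/
def KnotsAgreeAt (T : TMesh d N) (k : Fin d) (t : ℝ) (A B : Box d) : Prop :=
  ∀ n : ℕ, t = n → (n ∈ gv T k A ↔ n ∈ gv T k B)

lemma equivalence_knotsAgreeAt (k : Fin d) (t : ℝ) : Equivalence (KnotsAgreeAt T k t) where
  refl _ _ _ := Iff.rfl
  symm h n hn := (h n hn).symm
  trans h h' n hn := (h n hn).trans (h' n hn)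

lemma mem_ATJ_iff {j : Fin d} {n : ℕ} :
    x ∈ ATJ T p j n ↔
      x j = n ∧ ∃ A ∈ anchorsAt T p x, ∃ B ∈ anchorsAt T p x, n ∈ gv T j A ∧ n ∉ gv T j B := by
  simp only [ATJ, slice, anchorsAt, mem_inter_iff, mem_ofPred_eq, mem_iUnion, exists_prop]
  constructor
  · rintro ⟨⟨⟨-, hx⟩, A, ⟨hA, hnA⟩, hxA⟩, B, ⟨hB, hnB⟩, hxB⟩
    exact ⟨hx, A, ⟨hA, hxA⟩, B, ⟨hB, hxB⟩, hnA, hnB⟩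
  · rintro ⟨hx, A, ⟨hA, hxA⟩, B, ⟨hB, hxB⟩, hnA, hnB⟩
    exact ⟨⟨⟨suppA_subset_domain hxA, hx⟩, A, ⟨hA, hnA⟩, hxA⟩, B, ⟨hB, hnB⟩, hxB⟩

lemma notMem_ATJfull_iff {j : Fin d} :
    x ∉ ATJfull T p j ↔
      ∀ A ∈ anchorsAt T p x, ∀ B ∈ anchorsAt T p x, KnotsAgreeAt T j (x j) A B := by
  simp only [ATJfull, mem_iUnion, mem_Iic, exists_prop, not_exists, not_and, mem_ATJ_iff, not_not]
  constructor
  · intro h A hA B hB n hn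
    exact ⟨fun hnA => h n hnA.1 hn A hA B hB hnA, fun hnB => h n hnB.1 hn B hB A hA hnB⟩
  · exact fun h n _ hn A hA B hB hnA => (h A hA B hB n hn).1 hnA

lemma aas_iff_notMem_ATJfull :
    AAS T p ↔ ∀ x, Pairwise fun i j => x ∉ ATJfull T p i ∨ x ∉ ATJfull T p j := by
  simp only [AAS, ATJfull, mem_iUnion, mem_Iic, eq_empty_iff_forall_notMem, mem_inter_iff,
    Pairwise]
  grind

lemma aas_iff :
    AAS T p ↔ ∀ x, Pairwise fun i j => ∀ A ∈ anchorsAt T p x, ∀ B ∈ anchorsAt T p x,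
      KnotsAgreeAt T i (x i) A B ∨ KnotsAgreeAt T j (x j) A B := by
  simp only [aas_iff_notMem_ATJfull, notMem_ATJfull_iff,
    forall_or_iff_of_equivalence (equivalence_knotsAgreeAt _ _) (equivalence_knotsAgreeAt _ _)]

lemma overlaps_anchorKV_iff (hA : x ∈ suppA T p A) (hB : x ∈ suppA T p B) (k : Fin d) :
    Overlaps (anchorKV T p A k) (anchorKV T p B k) ↔
      ∀ t ∈ convOf (anchorKV T p A k) ∩ convOf (anchorKV T p B k), KnotsAgreeAt T k t A B := by
  have blockA := isBlockOf_anchorKV hA k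
  have blockB := isBlockOf_anchorKV hB k
  rw [overlaps_iff blockA.2.1 blockB.2.1]
  constructor
  · rintro h _ ⟨hnA, hnB⟩ n rfl
    rw [← blockA.mem_iff hnA, ← blockB.mem_iff hnB, h n hnA hnB]
  · intro h n hnA hnB
    rw [blockA.mem_iff hnA, blockB.mem_iff hnB, h n ⟨hnA, hnB⟩ n rfl]

lemma strongPartOverlap_iff :
    StrongPartOverlap T p A B ↔ ∀ x ∈ suppA T p A ∩ suppA T p B,
      Pairwise fun i j => KnotsAgreeAt T i (x i) A B ∨ KnotsAgreeAt T j (x j) A B := by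
  have hcard := card_sub_one_le_ncard_iff
    {k : Fin d | Overlaps (anchorKV T p A k) (anchorKV T p B k)}
  rw [Nat.card_fin] at hcard
  rw [StrongPartOverlap, hcard, suppA, suppA, ← pi_inter_distrib,
    forall_mem_pi_pairwise_or_iff (P := fun k t => KnotsAgreeAt T k t A B)]
  refine or_congr_right' fun hne => ?_
  rw [pi_inter_distrib] at hne
  obtain ⟨x, hxA, hxB⟩ := nonempty_iff_ne_empty.2 hne
  simp only [mem_ofPred_eq, overlaps_anchorKV_iff hxA hxB]

lemma sdc_iff :
    SDC T p ↔ ∀ x, Pairwise fun i j => ∀ A ∈ anchorsAt T p x, ∀ B ∈ anchorsAt T p x,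
      KnotsAgreeAt T i (x i) A B ∨ KnotsAgreeAt T j (x j) A B := by
  simp only [SDC, strongPartOverlap_iff]
  constructor
  · rintro h x i j hij A ⟨hA, hxA⟩ B ⟨hB, hxB⟩
    rcases eq_or_ne A B with rfl | hAB
    · exact Or.inl ((equivalence_knotsAgreeAt i (x i)).refl A)
    · exact h A B hA hB hAB x ⟨hxA, hxB⟩ hij
  · exact fun h A B hA hB _ x hx i j hij => h x hij A ⟨hA, hx.1⟩ B ⟨hB, hx.2⟩

end Anchors

theorem aas_iff_sdc_general {d : ℕ} {N p : Fin d → ℕ} (T : TMesh d N) : AAS T p ↔ SDC T p :=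
  aas_iff.trans sdc_iff.symm

end TSpline

/-- An admissible T-mesh (`d ≥ 3`) is abstractly analysis-suitable if
and only if it is strongly dual-compatible. -/
theorem TSpline.aas_iff_sdc
    {d : ℕ} {N p : Fin d → ℕ} (hd : 3 ≤ d) (T : TSpline.TMesh d N)
    (hadm : TSpline.Admissible p T) :
    TSpline.AAS T p ↔ TSpline.SDC T p :=
  aas_iff_sdc_general T
end
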